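/- arXiv:1912.11681 — 3 statements merged into one kernel-verified Lean document; each statement's English description precedes it below -/
import Mathlib

section
/- Let p ≥ q ≥ 2 be integers, n = p + q, and let λ₁,…,λ_p ∈ ℂ be pairwise distinct, μ₁,…,μ_q ∈ ℂ be pairwise distinct, with at most one element of {λ₁,…,λ_p,μ₁,…,μ_q} equal to 0. Let f = ∏_{i=1}^p (x₀ − λᵢx₁) · ∏_{j=1}^q (x₀ − μⱼx₂) ∈ ℂ[x₀,x₁,x₂] and F = {x ∈ ℂ³ : f(x) = 1}. Then the first singular homology group H₁(F; ℂ) is a ℂ-vector space of dimension n − 1. -/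
open CategoryTheory AlgebraicTopology

/-- First singular homology with complex coefficients, as a functor
`TopCat ⥤ ModuleCat ℂ`: the singular simplicial set, followed by the free
`ℂ`-module functor, the alternating face map (singular chain) complex, and
homology in degree `1`. -/
noncomputable def H1 : TopCat ⥤ ModuleCat ℂ :=
  TopCat.toSSet ⋙ ((SimplicialObject.whiskering _ _).obj (ModuleCat.free ℂ)) ⋙
    alternatingFaceMapComplex (ModuleCat ℂ) ⋙
    HomologicalComplex.homologyFunctor (ModuleCat ℂ) (ComplexShape.down ℕ) 1

/-- The Milnor fibre `F = {x ∈ ℂ³ : f(x) = 1}` of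
`f = ∏ᵢ (x₀ − λᵢ x₁) · ∏ⱼ (x₀ − μⱼ x₂)`. -/
abbrev MilnorFibre (p q : ℕ) (lam : Fin p → ℂ) (mu : Fin q → ℂ) : Type :=
  {v : Fin 3 → ℂ // (∏ i, (v 0 - lam i * v 1)) * (∏ j, (v 0 - mu j * v 2)) = 1}

/-!
A path cocycle is a function on paths that is additive over squares, and the space of restrictions
of path cocycles to loops has the same dimension as `H₁`.

Put `n = p + q`. On `{x₀ ≠ 0}` the coordinates `u = x₁ / x₀` and `v = x₂ / x₀` present the Milnor
fibre as the cyclic covering `x₀⁻ⁿ = P u * Q v` of a product of two punctured planes, where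
`P u = ∏ (1 - λᵢ u)` and `Q v = ∏ (1 - μⱼ v)`. It is also a quotient of the product of the infinite
cyclic coverings on which `log P` and `log Q` live. Because a point and its translate by the
generator can be joined in each of these, deck transformations do not change the value of a cocycle
on a loop. Averaging over the deck group then makes the cocycle come from the base, hence from the
two factors, where the increments of `log (1 - λᵢ u)` and `log (1 - μⱼ v)` span.

So on `{x₀ ≠ 0}` every cocycle is a combination of the increments of the logarithms of the linear
factors and of `x₀`. The locus `x₀ = 0` has a neighbourhood swept out by discs transverse to it:
loops can be pushed off the locus along these discs, and since a small circle around it bounds a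
disc, `log x₀` does not contribute unless `x₀` is itself a factor. The `n` increments therefore
span. Their sum vanishes because the product of the factors is `1`, and the loops on which `u` or
`v` turns `n` times around a single puncture show that there is no further relation.
-/

open unitInterval

/-! ### Path cocycles -/

section PathCocycle

variable {X Y A : Type*} [TopologicalSpace X] [TopologicalSpace Y] [AddCommGroup A]

/-- A cubical `1`-cocycle on `X` with values in `A`: a function on paths which vanishes on constant
paths and whose signed sum over the boundary of any singular square is zero. -/
structure IsPathCocycle (φ : C(I, X) → A) : Prop where
  const : ∀ x, φ (.const I x) = 0
  square : ∀ s : C(I × I, X),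
    φ ⟨fun t => s (t, 0), by fun_prop⟩ + φ ⟨fun t => s (1, t), by fun_prop⟩ =
      φ ⟨fun t => s (0, t), by fun_prop⟩ + φ ⟨fun t => s (t, 1), by fun_prop⟩

/-- The path cocycles on `X` with values in `A`, as an `R`-module. -/
def pathCocycles (R X A : Type*) [TopologicalSpace X] [Ring R] [AddCommGroup A] [Module R A] :
    Submodule R (C(I, X) → A) where
  carrier := {φ | IsPathCocycle φ}
  zero_mem' := ⟨fun _ => rfl, fun _ => rfl⟩
  add_mem' {φ ψ} hφ hψ :=
    ⟨fun x => by simp [hφ.const, hψ.const], fun s => by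
      simp only [Pi.add_apply]
      rw [add_add_add_comm, hφ.square, hψ.square, add_add_add_comm]⟩
  smul_mem' c φ hφ :=
    ⟨fun x => by simp [hφ.const], fun s => by simp only [Pi.smul_apply, ← smul_add, hφ.square]⟩

/-- The restrictions to loops of the path cocycles on `X`. Path cocycles vanishing on loops are
coboundaries, so this is the first cohomology group of `X` with coefficients in `A`. -/
def loopPeriods (R X A : Type*) [TopologicalSpace X] [Ring R] [AddCommGroup A] [Module R A] :
    Submodule R ({γ : C(I, X) // γ 0 = γ 1} → A) :=
  (pathCocycles R X A).map (LinearMap.funLeft R A Subtype.val)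

/-- The path in `X` obtained by mapping the straight segment from `a` to `b` by `G`. -/
def segmentPath {E : Type*} [AddCommGroup E] [Module ℝ E] [TopologicalSpace E]
    [IsTopologicalAddGroup E] [ContinuousSMul ℝ E] (G : C(E, X)) (a b : E) : C(I, X) :=
  ⟨fun t => G (AffineMap.lineMap a b (t : ℝ)), by
    simp only [AffineMap.lineMap_apply_module']; fun_prop⟩

namespace IsPathCocycle

variable {φ ψ : C(I, X) → A}

theorem sub (hφ : IsPathCocycle φ) (hψ : IsPathCocycle ψ) : IsPathCocycle (φ - ψ) :=
  (pathCocycles ℤ X A).sub_mem hφ hψ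

theorem sum {ι : Type*} (s : Finset ι) {φ : ι → C(I, X) → A} (h : ∀ i ∈ s, IsPathCocycle (φ i)) :
    IsPathCocycle (∑ i ∈ s, φ i) :=
  (pathCocycles ℤ X A).sum_mem h

theorem smul {R : Type*} [Ring R] [Module R A] (h : IsPathCocycle φ) (c : R) :
    IsPathCocycle (c • φ) :=
  (pathCocycles R X A).smul_mem c h

theorem comp {φ : C(I, Y) → A} (h : IsPathCocycle φ) (f : C(X, Y)) :
    IsPathCocycle fun γ => φ (f.comp γ) where
  const x := h.const (f x)
  square s := h.square (f.comp s)

theorem eq_zero_of_forall_eq (h : IsPathCocycle φ) {γ : C(I, X)} {x : X} (hγ : ∀ t, γ t = x) :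
    φ γ = 0 := by
  rw [← h.const x]
  exact congrArg φ (ContinuousMap.ext hγ)

theorem add_eq_add_of_square (h : IsPathCocycle φ) {s : I × I → X} (hs : Continuous s)
    {bottom right left top : C(I, X)} (hb : ∀ t, bottom t = s (t, 0))
    (hr : ∀ t, right t = s (1, t)) (hl : ∀ t, left t = s (0, t)) (ht : ∀ t, top t = s (t, 1)) :
    φ bottom + φ right = φ left + φ top := by
  convert h.square ⟨s, hs⟩ using 3 <;> ext t <;> simp [*]

theorem segmentPath_add (h : IsPathCocycle φ) {E : Type*} [AddCommGroup E] [Module ℝ E]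
    [TopologicalSpace E] [IsTopologicalAddGroup E] [ContinuousSMul ℝ E] (G : C(E, X)) (a b c : E) :
    φ (segmentPath G a b) + φ (segmentPath G b c) = φ (segmentPath G a c) := by
  have := h.add_eq_add_of_square (left := .const I (G a))
    (s := fun z => G (AffineMap.lineMap a (AffineMap.lineMap b c (z.2 : ℝ)) (z.1 : ℝ)))
    (by simp only [AffineMap.lineMap_apply_module']; fun_prop)
    (bottom := segmentPath G a b) (right := segmentPath G b c) (top := segmentPath G a c)
    (by simp [segmentPath]) (by simp [segmentPath]) (by simp) (by simp [segmentPath])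
  rwa [h.const, zero_add] at this

theorem symm (h : IsPathCocycle φ) {x y : X} (γ : Path x y) :
    φ γ.symm.toContinuousMap = -φ γ.toContinuousMap := by
  have forth : segmentPath γ.extend 0 1 = γ.toContinuousMap := by
    ext t
    simp [segmentPath, AffineMap.lineMap_apply_module]
  have back : segmentPath γ.extend 1 0 = γ.symm.toContinuousMap := by
    ext t
    have hσ : AffineMap.lineMap 1 0 (t : ℝ) = ((σ t : I) : ℝ) := by
      simp [AffineMap.lineMap_apply_module]
    simp only [segmentPath, ContinuousMap.coe_mk, hσ, Path.extend_extends']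
    rfl
  have stay : φ (segmentPath γ.extend 0 0) = 0 :=
    h.eq_zero_of_forall_eq (x := x) (by simp [segmentPath])
  have add := h.segmentPath_add γ.extend 0 1 0
  rw [forth, back, stay] at add
  exact eq_neg_of_add_eq_zero_right add

theorem trans (h : IsPathCocycle φ) {x y z : X} (γ : Path x y) (γ' : Path y z) :
    φ (γ.trans γ').toContinuousMap = φ γ.toContinuousMap + φ γ'.toContinuousMap := by
  have first : segmentPath (γ.trans γ').extend 0 (1 / 2) = γ.toContinuousMap := by
    ext t
    have ht : (t : ℝ) * (1 / 2) ≤ 1 / 2 := by linarith [t.2.2]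
    simp only [segmentPath, AffineMap.lineMap_apply_module', sub_zero, add_zero, smul_eq_mul,
      ContinuousMap.coe_mk, Path.extend_trans_of_le_half _ _ ht]
    rw [mul_left_comm, mul_one_div_cancel two_ne_zero, mul_one, Path.extend_extends']
    rfl
  have second : segmentPath (γ.trans γ').extend (1 / 2) 1 = γ'.toContinuousMap := by
    ext t
    have ht : 1 / 2 ≤ (t : ℝ) * (1 - 1 / 2) + 1 / 2 := by linarith [t.2.1]
    simp only [segmentPath, AffineMap.lineMap_apply_module', smul_eq_mul,
      ContinuousMap.coe_mk, Path.extend_trans_of_half_le _ _ ht]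
    rw [show 2 * ((t : ℝ) * (1 - 1 / 2) + 1 / 2) - 1 = t by ring, Path.extend_extends']
    rfl
  have whole : segmentPath (γ.trans γ').extend 0 1 = (γ.trans γ').toContinuousMap := by
    ext t
    simp [segmentPath, AffineMap.lineMap_apply_module]
  rw [← first, ← second, ← whole, h.segmentPath_add]

theorem exists_primitive (h : IsPathCocycle φ) (hloop : ∀ γ : C(I, X), γ 0 = γ 1 → φ γ = 0) :
    ∃ f : X → A, ∀ γ : C(I, X), φ γ = f (γ 1) - f (γ 0) := by
  let base (x : X) : X := (Quotient.mk (pathSetoid X) x).out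
  have joined (x : X) : Joined (base x) x := Quotient.mk_out (s := pathSetoid X) x
  refine ⟨fun x => φ (joined x).somePath.toContinuousMap, fun γ => ?_⟩
  let γ' : Path (γ 0) (γ 1) := ⟨γ, rfl, rfl⟩
  have hbase : base (γ 0) = base (γ 1) :=
    congrArg Quotient.out (Quotient.sound (s := pathSetoid X) ⟨γ'⟩)
  have := hloop (((joined (γ 0)).somePath.trans γ').trans
    (joined (γ 1)).somePath.symm).toContinuousMap (by simpa using hbase)
  rw [h.trans, h.trans, h.symm, ← sub_eq_add_neg, sub_eq_zero] at this
  exact eq_sub_of_add_eq' this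

theorem exists_primitive_on (h : IsPathCocycle φ) (s : Set X)
    (hloop : ∀ γ : C(I, X), (∀ t, γ t ∈ s) → γ 0 = γ 1 → φ γ = 0) :
    ∃ f : X → A, ∀ γ : C(I, X), (∀ t, γ t ∈ s) → φ γ = f (γ 1) - f (γ 0) := by
  classical
  obtain ⟨f, hf⟩ := (h.comp ⟨Subtype.val, continuous_subtype_val (p := (· ∈ s))⟩).exists_primitive
    fun γ hγ => hloop _ (fun t => (γ t).2) (congrArg Subtype.val hγ)
  refine ⟨fun x => if hx : x ∈ s then f ⟨x, hx⟩ else 0, fun γ hγ => ?_⟩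
  simp only [hγ, dif_pos]
  exact hf ⟨fun t => ⟨γ t, hγ t⟩, by fun_prop⟩

theorem eq_sub_of_isOpen_cover (h : IsPathCocycle φ) {ι : Type*} {U : ι → Set X}
    (hU : ∀ i, IsOpen (U i)) (hcover : ∀ x, ∃ i, x ∈ U i) {f : X → A}
    (hf : ∀ i (γ : C(I, X)), (∀ t, γ t ∈ U i) → φ γ = f (γ 1) - f (γ 0)) (γ : C(I, X)) :
    φ γ = f (γ 1) - f (γ 0) := by
  obtain ⟨t, t_zero, t_mono, ⟨N, t_eq_one⟩, t_sub⟩ :=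
    exists_monotone_Icc_subset_open_cover_unitInterval (fun i => (hU i).preimage γ.continuous)
      (fun x _ => by simpa using hcover (γ x))
  let G : C(ℝ, X) := γ.comp ⟨Set.projIcc 0 1 zero_le_one, continuous_projIcc⟩
  have hG (u : I) : G u = γ u := by simp [G]
  have upto (m : ℕ) : φ (segmentPath G 0 (t m)) = f (γ (t m)) - f (γ 0) := by
    induction m with
    | zero =>
      rw [t_zero, sub_self]
      exact h.eq_zero_of_forall_eq (x := G 0) (by simp [segmentPath])
    | succ m ih =>
      obtain ⟨i, hi⟩ := t_sub m
      have step := hf i (segmentPath G (t m) (t (m + 1))) fun u => by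
        have hu : AffineMap.lineMap (t m : ℝ) (t (m + 1) : ℝ) (u : ℝ) ∈
            Set.Icc (t m : ℝ) (t (m + 1)) := by
          rw [← segment_eq_Icc (show (t m : ℝ) ≤ t (m + 1) from t_mono m.le_succ),
            segment_eq_image_lineMap]
          exact Set.mem_image_of_mem _ u.2
        have hu' := hi (show (⟨_, (t m).2.1.trans hu.1, hu.2.trans (t (m + 1)).2.2⟩ : I) ∈ _
          from hu)
        rwa [Set.mem_preimage, ← hG] at hu'
      rw [← h.segmentPath_add G 0 (t m), ih, step]
      simp [segmentPath, hG]
  have whole : segmentPath G 0 (t N) = γ := by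
    ext u
    simp [segmentPath, t_eq_one N le_rfl, AffineMap.lineMap_apply_module, hG]
  have total := upto N
  rwa [whole, t_eq_one N le_rfl] at total

end IsPathCocycle
end PathCocycle

/-! ### Path cocycles and singular homology -/

section HomologyDual

variable {K V : Type*} [Field K] [AddCommGroup V] [Module K V]

theorem dualAnnihilator_submoduleOf_eq_map {B Z : Submodule K V} (hBZ : B ≤ Z) :
    (B.submoduleOf Z).dualAnnihilator = B.dualAnnihilator.map Z.dualRestrict := by
  ext ψ
  simp only [Submodule.mem_map, Submodule.mem_dualAnnihilator, Submodule.submoduleOf,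
    Submodule.mem_comap]
  constructor
  · intro hψ
    obtain ⟨ψ', rfl⟩ := Subspace.dualRestrict_surjective (W := Z) ψ
    exact ⟨ψ', fun x hx => hψ ⟨x, hBZ hx⟩ hx, rfl⟩
  · rintro ⟨ψ', hψ', rfl⟩ x hx
    exact hψ' x hx

theorem finrank_quotient_submoduleOf {B Z : Submodule K V} (hBZ : B ≤ Z) :
    Module.finrank K (Z ⧸ B.submoduleOf Z) =
      Module.finrank K (B.dualAnnihilator.map Z.dualRestrict) := by
  rw [← Subspace.dual_finrank_eq, (Submodule.dualQuotEquivDualAnnihilator _).finrank_eq,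
    dualAnnihilator_submoduleOf_eq_map hBZ]

theorem finrank_map_eq_finrank_map {W W' : Type*} [AddCommGroup W] [Module K W] [AddCommGroup W']
    [Module K W'] {P : Submodule K V} {f : V →ₗ[K] W} {g : V →ₗ[K] W'}
    (h : ∀ x ∈ P, f x = 0 ↔ g x = 0) :
    Module.finrank K (P.map f) = Module.finrank K (P.map g) := by
  have hker : LinearMap.ker (f.domRestrict P) = LinearMap.ker (g.domRestrict P) := by
    ext x
    exact h x x.2
  rw [← LinearMap.range_domRestrict, ← LinearMap.range_domRestrict,
    ← (LinearMap.quotKerEquivRange _).finrank_eq, ← (LinearMap.quotKerEquivRange _).finrank_eq,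
    hker]

end HomologyDual

section SingularHomology

open Simplicial Opposite

variable (X : TopCat.{0})

/-- The complex of singular chains of `X` with complex coefficients; `H1` is its first homology. -/
noncomputable abbrev singularChains : ChainComplex (ModuleCat ℂ) ℕ :=
  (alternatingFaceMapComplex (ModuleCat ℂ)).obj
    (((SimplicialObject.whiskering _ _).obj (ModuleCat.free ℂ)).obj (TopCat.toSSet.obj X))

/-- The differential of singular chains, as a linear map between free modules. -/
noncomputable def singularBoundary (n : ℕ) :
    (TopCat.toSSet.obj X _⦋n + 1⦌ →₀ ℂ) →ₗ[ℂ] (TopCat.toSSet.obj X _⦋n⦌ →₀ ℂ) :=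
  ∑ i : Fin (n + 2), ((-1 : ℤ) ^ (i : ℕ)) • Finsupp.lmapDomain ℂ ℂ ((TopCat.toSSet.obj X).δ i)

theorem singularChains_d_hom (n : ℕ) :
    ((singularChains X).d (n + 1) n).hom = singularBoundary X n := by
  rw [alternatingFaceMapComplex_obj_d, AlternatingFaceMapComplex.objD, singularBoundary]
  exact (ModuleCat.hom_sum _ _).trans (Finset.sum_congr rfl fun i _ => ModuleCat.hom_zsmul _ _)

theorem singularBoundary_single (n : ℕ) (τ : TopCat.toSSet.obj X _⦋n + 1⦌) :
    singularBoundary X n (Finsupp.single τ 1) =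
      ∑ i : Fin (n + 2),
        ((-1 : ℂ) ^ (i : ℕ)) • Finsupp.single ((TopCat.toSSet.obj X).δ i τ) 1 := by
  rw [singularBoundary, LinearMap.sum_apply]
  refine Finset.sum_congr rfl fun i _ => ?_
  rw [LinearMap.smul_apply, Finsupp.lmapDomain_apply, Finsupp.mapDomain_single,
    ← Int.cast_smul_eq_zsmul ℂ]
  simp

theorem range_singularBoundary_le_ker :
    LinearMap.range (singularBoundary X 1) ≤ LinearMap.ker (singularBoundary X 0) := by
  rw [LinearMap.range_le_ker_iff, ← singularChains_d_hom, ← singularChains_d_hom]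
  exact congrArg ModuleCat.Hom.hom ((singularChains X).d_comp_d 2 1 0)

theorem finrank_H1_obj_eq_finrank_dualAnnihilator :
    Module.finrank ℂ (H1.obj X) = Module.finrank ℂ
      ((LinearMap.range (singularBoundary X 1)).dualAnnihilator.map
        (LinearMap.ker (singularBoundary X 0)).dualRestrict) := by
  rw [← finrank_quotient_submoduleOf (range_singularBoundary_le_ker X)]
  let S := (singularChains X).sc' 2 1 0
  have e : H1.obj X ≅ _ := (singularChains X).homologyIsoSc' 2 1 0 (by simp) (by simp) ≪≫
    S.moduleCatHomologyIso
  rw [LinearEquiv.finrank_eq e.toLinearEquiv]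
  have hf : S.f.hom = singularBoundary X 1 := singularChains_d_hom X 1
  have hg : S.g.hom = singularBoundary X 0 := singularChains_d_hom X 0
  have hrange : LinearMap.range S.moduleCatToCycles =
      (LinearMap.range S.f.hom).submoduleOf (LinearMap.ker S.g.hom) := by
    ext x
    simp only [LinearMap.mem_range, Submodule.submoduleOf, Submodule.mem_comap]
    exact exists_congr fun y => Subtype.ext_iff
  have (f g) (hf : S.f.hom = f) (hg : S.g.hom = g) :
      Module.finrank ℂ (LinearMap.ker S.g.hom ⧸ LinearMap.range S.moduleCatToCycles) =
        Module.finrank ℂ (LinearMap.ker g ⧸ (LinearMap.range f).submoduleOf (LinearMap.ker g)) := by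
    subst hf hg; rw [hrange]
  exact this _ _ hf hg

variable {X}

/-- Singular `1`-simplices as paths: the simplex coordinate with index `1` is the time. -/
noncomputable def simplexEquivPath : TopCat.toSSet.obj X _⦋1⦌ ≃ C(I, X) :=
  (TopCat.toSSetObjEquiv X _).trans
    { toFun f := f.comp stdSimplexHomeomorphUnitInterval.symm
      invFun γ := γ.comp stdSimplexHomeomorphUnitInterval
      left_inv f := by ext; simp
      right_inv γ := by ext; simp }

theorem simplexEquivPath_face_apply (τ : TopCat.toSSet.obj X _⦋2⦌) (i : Fin 3) (t : I) :
    simplexEquivPath ((TopCat.toSSet.obj X).δ i τ) t = TopCat.toSSetObjEquiv X _ τ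
      (stdSimplex.map i.succAbove (stdSimplexHomeomorphUnitInterval.symm t)) :=
  rfl

theorem coe_map_succAbove_homeomorph_symm (i : Fin 3) (t : I) :
    ⇑(stdSimplex.map i.succAbove (stdSimplexHomeomorphUnitInterval.symm t)) =
      (![![0, 1 - (t : ℝ), t], ![1 - (t : ℝ), 0, t], ![1 - (t : ℝ), t, 0]] :
        Fin 3 → Fin 3 → ℝ) i := by
  have h₀ : stdSimplexHomeomorphUnitInterval.symm t 0 = 1 - (t : ℝ) := rfl
  have h₁ : stdSimplexHomeomorphUnitInterval.symm t 1 = (t : ℝ) := rfl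
  ext j
  rw [stdSimplex.map_coe, FunOnFinite.linearMap_apply_apply, Finset.sum_filter, Fin.sum_univ_two]
  fin_cases i <;> fin_cases j <;> simp [Fin.succAbove, h₀, h₁]

theorem singularBoundary_simplexEquivPath_symm (γ : C(I, X)) :
    singularBoundary X 0 (Finsupp.single (simplexEquivPath.symm γ) 1) =
      Finsupp.single (TopCat.toSSetObj₀Equiv.symm (γ 1)) 1 -
        Finsupp.single (TopCat.toSSetObj₀Equiv.symm (γ 0)) 1 := by
  have face (i : Fin 2) : (TopCat.toSSet.obj X).δ i (simplexEquivPath.symm γ) =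
      TopCat.toSSetObj₀Equiv.symm (γ (if i = 0 then 1 else 0)) := by
    rw [Equiv.eq_symm_apply]
    refine congrArg γ (Subtype.ext ?_)
    have vertex : (default : stdSimplex ℝ (Fin 1)).1 0 = 1 := stdSimplex.eq_one_of_unique _ 0
    change FunOnFinite.linearMap ℝ ℝ i.succAbove (Subtype.val default) 1 = _
    rw [FunOnFinite.linearMap_apply_apply, Finset.sum_filter, Fin.sum_univ_one]
    fin_cases i <;> simp [Fin.succAbove, vertex]
  rw [singularBoundary_single, Fin.sum_univ_two, face, face]
  simp [sub_eq_add_neg]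

/-- The linear functional on singular `1`-chains induced by a function on paths. -/
noncomputable def chainFunctional :
    (C(I, X) → ℂ) ≃ₗ[ℂ] Module.Dual ℂ (TopCat.toSSet.obj X _⦋1⦌ →₀ ℂ) :=
  LinearEquiv.funCongrLeft ℂ ℂ simplexEquivPath ≪≫ₗ Finsupp.llift ℂ ℂ ℂ _

@[simp]
theorem chainFunctional_single (φ : C(I, X) → ℂ) (τ : TopCat.toSSet.obj X _⦋1⦌) :
    chainFunctional φ (Finsupp.single τ 1) = φ (simplexEquivPath τ) := by
  simp [chainFunctional]

theorem chainFunctional_singularBoundary_single (φ : C(I, X) → ℂ)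
    (τ : TopCat.toSSet.obj X _⦋2⦌) :
    chainFunctional φ (singularBoundary X 1 (Finsupp.single τ 1)) =
      φ (simplexEquivPath ((TopCat.toSSet.obj X).δ 0 τ)) -
        φ (simplexEquivPath ((TopCat.toSSet.obj X).δ 1 τ)) +
          φ (simplexEquivPath ((TopCat.toSSet.obj X).δ 2 τ)) := by
  rw [singularBoundary_single, map_sum, Fin.sum_univ_three]
  simp only [map_smul, chainFunctional_single]
  simp [sub_eq_add_neg]

/-- The affine map of the square onto the triangle collapsing the left side to the vertex `0`. -/
def squareToSimplex : C(I × I, stdSimplex ℝ (Fin 3)) where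
  toFun z := ⟨![1 - (z.1 : ℝ), z.1 * (1 - z.2), z.1 * z.2], by
    refine ⟨fun i => ?_, by simp [Fin.sum_univ_three]; ring⟩
    fin_cases i
    · exact sub_nonneg.2 z.1.2.2
    · exact mul_nonneg z.1.2.1 (sub_nonneg.2 z.2.2.2)
    · exact mul_nonneg z.1.2.1 z.2.2.1⟩
  continuous_toFun := by
    refine .subtype_mk (continuous_pi fun i => ?_) _
    fin_cases i <;> simp only [Fin.zero_eta, Fin.isValue, Fin.mk_one, Fin.reduceFinMk,
      Matrix.cons_val_zero, Matrix.cons_val_one, Matrix.cons_val] <;> fun_prop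

theorem coe_squareToSimplex (z : I × I) :
    ⇑(squareToSimplex z) = ![1 - (z.1 : ℝ), z.1 * (1 - z.2), z.1 * z.2] :=
  rfl

/-- The lower right half `{(s, t) | t ≤ s}` of a singular square, as a singular `2`-simplex. -/
noncomputable def lowerTriangle (s : C(I × I, X)) : TopCat.toSSet.obj X _⦋2⦌ :=
  (TopCat.toSSetObjEquiv X _).symm <| s.comp
    { toFun (x : stdSimplex ℝ (Fin 3)) :=
        (⟨x.1 1 + x.1 2, add_nonneg (x.2.1 1) (x.2.1 2), by
          linarith [x.2.1 0, Fin.sum_univ_three x.1 ▸ x.2.2]⟩,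
        ⟨x.1 2, x.2.1 2, by
          linarith [x.2.1 0, x.2.1 1, Fin.sum_univ_three x.1 ▸ x.2.2]⟩)
      continuous_toFun :=
        have coord (i : Fin 3) : Continuous fun x : stdSimplex ℝ (Fin 3) => x.1 i :=
          (continuous_apply i).comp continuous_subtype_val
        ((coord 1).add (coord 2)).subtype_mk _ |>.prodMk ((coord 2).subtype_mk _) }

theorem simplexEquivPath_face_lowerTriangle (s : C(I × I, X)) (i : Fin 3) (t : I) :
    simplexEquivPath ((TopCat.toSSet.obj X).δ i (lowerTriangle s)) t =
      s ((![(1, t), (t, t), (t, 0)] : Fin 3 → I × I) i) := by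
  have h := coe_map_succAbove_homeomorph_symm i t
  set x := stdSimplex.map i.succAbove (stdSimplexHomeomorphUnitInterval.symm t)
  have hx : x.1 = _ := h
  rw [simplexEquivPath_face_apply]
  refine congrArg s (Prod.ext (Subtype.ext ?_) (Subtype.ext ?_))
  · change x.1 1 + x.1 2 = _
    rw [hx]
    fin_cases i <;> simp
  · change x.1 2 = _
    rw [hx]
    fin_cases i <;> simp

theorem IsPathCocycle.face_add_face {φ : C(I, X) → ℂ} (hφ : IsPathCocycle φ)
    (τ : TopCat.toSSet.obj X _⦋2⦌) :
    φ (simplexEquivPath ((TopCat.toSSet.obj X).δ 2 τ)) +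
        φ (simplexEquivPath ((TopCat.toSSet.obj X).δ 0 τ)) =
      φ (simplexEquivPath ((TopCat.toSSet.obj X).δ 1 τ)) := by
  let E := TopCat.toSSetObjEquiv X _ τ
  have side (i : Fin 3) (z : I → I × I)
      (hz : ∀ t, (squareToSimplex (z t) : Fin 3 → ℝ) =
        (![![0, 1 - (t : ℝ), t], ![1 - (t : ℝ), 0, t], ![1 - (t : ℝ), t, 0]] :
          Fin 3 → Fin 3 → ℝ) i) (t : I) :
      simplexEquivPath ((TopCat.toSSet.obj X).δ i τ) t = E (squareToSimplex (z t)) :=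
    congrArg E (Subtype.ext ((coe_map_succAbove_homeomorph_symm i t).trans (hz t).symm))
  have := hφ.add_eq_add_of_square (s := fun z => E (squareToSimplex z)) (by fun_prop)
    (left := .const I (E (squareToSimplex (0, 0))))
    (side 2 (fun t => (t, 0)) fun t => (coe_squareToSimplex _).trans (by simp))
    (side 0 (fun t => (1, t)) fun t => (coe_squareToSimplex _).trans (by simp))
    (fun t => congrArg E (Subtype.ext (by
      simp [squareToSimplex])))
    (side 1 (fun t => (t, 1)) fun t => (coe_squareToSimplex _).trans (by simp))
  rwa [hφ.const, zero_add] at this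

theorem isPathCocycle_of_chainFunctional_singularBoundary_eq_zero {φ : C(I, X) → ℂ}
    (hφ : ∀ τ, chainFunctional φ (singularBoundary X 1 (Finsupp.single τ 1)) = 0) :
    IsPathCocycle φ := by
  have triangle (s : C(I × I, X)) : φ ⟨fun t => s (t, 0), by fun_prop⟩ +
      φ ⟨fun t => s (1, t), by fun_prop⟩ = φ ⟨fun t => s (t, t), by fun_prop⟩ := by
    have := hφ (lowerTriangle s)
    rw [chainFunctional_singularBoundary_single, sub_add_comm, sub_add_eq_add_sub,
      sub_eq_zero] at this
    convert this using 3 <;> ext t <;> simp [simplexEquivPath_face_lowerTriangle]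
  refine ⟨fun x => ?_, fun s => ?_⟩
  · exact add_eq_right.1 (triangle (.const _ x))
  · have upper := triangle (s.comp .prodSwap)
    exact (triangle s).trans upper.symm

theorem map_chainFunctional_pathCocycles :
    (pathCocycles ℂ X ℂ).map chainFunctional.toLinearMap =
      (LinearMap.range (singularBoundary X 1)).dualAnnihilator := by
  refine Submodule.ext fun ψ => ⟨?_, fun hψ => ⟨chainFunctional.symm ψ, ?_, by simp⟩⟩
  · rintro ⟨φ, hφ : IsPathCocycle φ, rfl⟩
    refine (Submodule.mem_dualAnnihilator _).2 (LinearMap.range_le_ker_iff.2 ?_)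
    refine Finsupp.lhom_ext' fun τ => LinearMap.ext_ring ?_
    have := hφ.face_add_face τ
    change chainFunctional φ (singularBoundary X 1 (Finsupp.single τ 1)) = 0
    rw [chainFunctional_singularBoundary_single]
    linear_combination this
  · refine isPathCocycle_of_chainFunctional_singularBoundary_eq_zero fun τ => ?_
    rw [LinearEquiv.apply_symm_apply]
    exact (Submodule.mem_dualAnnihilator _).1 hψ _ ⟨_, rfl⟩

theorem IsPathCocycle.dualRestrict_chainFunctional_eq_zero_iff {φ : C(I, X) → ℂ}
    (hφ : IsPathCocycle φ) :
    (LinearMap.ker (singularBoundary X 0)).dualRestrict (chainFunctional φ) = 0 ↔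
      ∀ γ : C(I, X), γ 0 = γ 1 → φ γ = 0 := by
  constructor
  · intro h γ hγ
    have := DFunLike.congr_fun h ⟨Finsupp.single (simplexEquivPath.symm γ) 1, by
      rw [LinearMap.mem_ker, singularBoundary_simplexEquivPath_symm, hγ, sub_self]⟩
    simpa using this
  · intro h
    obtain ⟨f, hf⟩ := hφ.exists_primitive h
    have hfactor : chainFunctional φ =
        Finsupp.linearCombination ℂ (f ∘ TopCat.toSSetObj₀Equiv) ∘ₗ singularBoundary X 0 := by
      refine Finsupp.lhom_ext' fun τ => LinearMap.ext_ring ?_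
      obtain ⟨γ, rfl⟩ := simplexEquivPath.symm.surjective τ
      simp [singularBoundary_simplexEquivPath_symm, hf]
    ext ⟨x, hx⟩
    simp [hfactor, LinearMap.mem_ker.1 hx]

end SingularHomology

theorem finrank_H1_obj_eq_finrank_loopPeriods (X : Type) [TopologicalSpace X] :
    Module.finrank ℂ (H1.obj (TopCat.of X)) = Module.finrank ℂ (loopPeriods ℂ X ℂ) := by
  rw [finrank_H1_obj_eq_finrank_dualAnnihilator, ← map_chainFunctional_pathCocycles,
    ← Submodule.map_comp, loopPeriods]
  refine finrank_map_eq_finrank_map fun φ hφ => ?_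
  rw [funext_iff, Subtype.forall]
  exact IsPathCocycle.dualRestrict_chainFunctional_eq_zero_iff hφ

/-! ### Logarithm increments -/

section LogIncrement

theorem eq_add_int_mul_of_exp_eq_exp {X : Type*} [TopologicalSpace X] [PreconnectedSpace X]
    {L L' : X → ℂ} (hL : Continuous L) (hL' : Continuous L')
    (h : ∀ x, Complex.exp (L x) = Complex.exp (L' x)) :
    ∃ n : ℤ, ∀ x, L x = L' x + n * (2 * Real.pi * Complex.I) := by
  choose n hn using fun x => Complex.exp_eq_exp_iff_exists_int.1 (h x)
  have n_eq (x : X) : (n x : ℝ) = ((L x - L' x) / (2 * Real.pi * Complex.I)).re := by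
    rw [hn, add_sub_cancel_left, mul_div_cancel_right₀ _ Complex.two_pi_I_ne_zero,
      Complex.intCast_re]
  have n_continuous : Continuous n := by
    refine Int.isClosedEmbedding_coe_real.continuous_iff.2 ?_
    simp only [Function.comp_def, n_eq]
    fun_prop
  rcases isEmpty_or_nonempty X with hX | ⟨⟨x₀⟩⟩
  · exact ⟨0, hX.elim⟩
  · exact ⟨n x₀, fun x => by rw [hn, PreconnectedSpace.constant ‹_› n_continuous (y := x₀)]⟩

theorem exists_continuous_log_on_square {g : I × I → ℂ} (hg : Continuous g)
    (g_ne : ∀ z, g z ≠ 0) : ∃ L, Continuous L ∧ ∀ z, Complex.exp (L z) = g z := by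
  let r : C(ℝ × ℝ, I × I) :=
    ⟨Prod.map (Set.projIcc 0 1 zero_le_one) (Set.projIcc 0 1 zero_le_one), by fun_prop⟩
  obtain ⟨L, ⟨-, hL⟩, -⟩ := Complex.isCoveringMapOn_exp.existsUnique_continuousMap_lifts
    ((⟨g, hg⟩ : C(_, ℂ)).comp r) (a₀ := 0) (Complex.exp_log (g_ne (r 0))) (fun x => g_ne (r x))
  refine ⟨fun z => L (z.1, z.2), by fun_prop, fun z => (congrFun hL _).trans ?_⟩
  simp [r]

theorem exists_continuous_log_on_interval {g : I → ℂ} (hg : Continuous g)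
    (g_ne : ∀ t, g t ≠ 0) : ∃ L, Continuous L ∧ ∀ t, Complex.exp (L t) = g t := by
  obtain ⟨L, hL, exp_L⟩ := exists_continuous_log_on_square (g := fun z => g z.1) (by fun_prop)
    fun z => g_ne z.1
  exact ⟨fun t => L (t, 0), by fun_prop, fun t => exp_L (t, 0)⟩

open Classical in
/-- The increment over `[0, 1]` of a continuous logarithm of `g`, with junk value `0` when there is
none. For a loop `g` in `ℂ \ {0}` this is `2πi` times the winding number of `g` around `0`. -/
noncomputable def logIncrement (g : I → ℂ) : ℂ :=
  if h : ∃ L, Continuous L ∧ ∀ t, Complex.exp (L t) = g t then h.choose 1 - h.choose 0 else 0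

theorem logIncrement_eq_sub {g L : I → ℂ} (hL : Continuous L)
    (exp_L : ∀ t, Complex.exp (L t) = g t) : logIncrement g = L 1 - L 0 := by
  have hex : ∃ L, Continuous L ∧ ∀ t, Complex.exp (L t) = g t := ⟨L, hL, exp_L⟩
  obtain ⟨n, hn⟩ := eq_add_int_mul_of_exp_eq_exp hex.choose_spec.1 hL fun t => by
    rw [hex.choose_spec.2, exp_L]
  rw [logIncrement, dif_pos hex, hn, hn, add_sub_add_right_eq_sub]

theorem logIncrement_mul {g h : I → ℂ} (hg : Continuous g) (hh : Continuous h)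
    (g_ne : ∀ t, g t ≠ 0) (h_ne : ∀ t, h t ≠ 0) :
    logIncrement (fun t => g t * h t) = logIncrement g + logIncrement h := by
  obtain ⟨L, hL, exp_L⟩ := exists_continuous_log_on_interval hg g_ne
  obtain ⟨M, hM, exp_M⟩ := exists_continuous_log_on_interval hh h_ne
  rw [logIncrement_eq_sub hL exp_L, logIncrement_eq_sub hM exp_M,
    logIncrement_eq_sub (hL.add hM) fun t => by rw [Pi.add_apply, Complex.exp_add, exp_L, exp_M]]
  simp only [Pi.add_apply]
  ring

theorem logIncrement_const (c : ℂ) : logIncrement (fun _ => c) = 0 := by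
  by_cases hc : c = 0
  · exact dif_neg fun ⟨L, _, exp_L⟩ => Complex.exp_ne_zero _ ((exp_L 0).trans hc)
  · rw [logIncrement_eq_sub continuous_const fun _ => Complex.exp_log hc, sub_self]

theorem logIncrement_const_mul {c : ℂ} (hc : c ≠ 0) {g : I → ℂ} (hg : Continuous g)
    (g_ne : ∀ t, g t ≠ 0) : logIncrement (fun t => c * g t) = logIncrement g := by
  rw [logIncrement_mul continuous_const hg (fun _ => hc) g_ne, logIncrement_const, zero_add]

theorem logIncrement_prod {ι : Type*} (s : Finset ι) {g : ι → I → ℂ}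
    (hg : ∀ i, Continuous (g i)) (g_ne : ∀ i t, g i t ≠ 0) :
    logIncrement (fun t => ∏ i ∈ s, g i t) = ∑ i ∈ s, logIncrement (g i) := by
  classical
  induction s using Finset.induction_on with
  | empty => simp [logIncrement_const]
  | insert a s ha ih =>
    simp only [Finset.prod_insert ha, Finset.sum_insert ha]
    rw [logIncrement_mul (hg a) (by fun_prop) (g_ne a)
      fun t => Finset.prod_ne_zero_iff.2 fun i _ => g_ne i t, ih]

theorem isPathCocycle_logIncrement {X : Type*} [TopologicalSpace X] {g : X → ℂ}
    (hg : Continuous g) (g_ne : ∀ x, g x ≠ 0) :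
    IsPathCocycle fun γ : C(I, X) => logIncrement fun t => g (γ t) where
  const x := logIncrement_const (g x)
  square s := by
    obtain ⟨L, hL, exp_L⟩ := exists_continuous_log_on_square (g := fun z => g (s z)) (by fun_prop)
      fun z => g_ne _
    have along {i : I → I × I} (hi : Continuous i) :
        logIncrement (fun t => g (s (i t))) = L (i 1) - L (i 0) :=
      logIncrement_eq_sub (hL.comp hi) fun t => exp_L (i t)
    simp only [ContinuousMap.coe_mk]
    rw [along (i := fun t => (t, 0)) (by fun_prop), along (i := fun t => (1, t)) (by fun_prop),
      along (i := fun t => (0, t)) (by fun_prop), along (i := fun t => (t, 1)) (by fun_prop)]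
    ring

theorem log_I_mul_sub_log_neg_I_mul {w : ℂ} (hw : w.re ≠ 0) :
    Complex.log (Complex.I * w) - Complex.log (-Complex.I * w) =
      (if 0 < w.re then 2 * Real.pi * Complex.I else 0) - Real.pi * Complex.I := by
  have log_mul (w : ℂ) (hw : 0 < w.re) :
      Complex.log (Complex.I * w) = Complex.log Complex.I + Complex.log w ∧
        Complex.log (-Complex.I * w) = Complex.log (-Complex.I) + Complex.log w := by
    have w_ne : w ≠ 0 := fun h => by simp [h] at hw
    have arg_lt := abs_lt.1 (Complex.abs_arg_lt_pi_div_two_iff.2 (.inl hw))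
    rw [Complex.log_mul_eq_add_log_iff Complex.I_ne_zero w_ne,
      Complex.log_mul_eq_add_log_iff (neg_ne_zero.2 Complex.I_ne_zero) w_ne,
      Complex.arg_I, Complex.arg_neg_I]
    constructor <;> constructor <;> linarith [Real.pi_pos]
  split_ifs with h
  · rw [(log_mul w h).1, (log_mul w h).2, Complex.log_I, Complex.log_neg_I]
    ring
  · have h' := log_mul (-w) (by
      rw [Complex.neg_re]
      exact neg_pos.2 (lt_of_le_of_ne (not_lt.1 h) hw))
    rw [← neg_mul_neg, h'.2, neg_mul, ← mul_neg, h'.1, Complex.log_I, Complex.log_neg_I]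
    ring

end LogIncrement

/-! ### Cocycles on punctured planes -/

section Homotopy

variable {X A : Type*} [TopologicalSpace X] [AddCommGroup A]

theorem IsPathCocycle.eq_of_homotopy_of_loop {φ : C(I, X) → A} (hφ : IsPathCocycle φ)
    {s : I × I → X} (hs : Continuous s) (hloop : ∀ t, s (0, t) = s (1, t)) {bottom top : C(I, X)}
    (hb : ∀ t, bottom t = s (t, 0)) (ht : ∀ t, top t = s (t, 1)) : φ bottom = φ top := by
  have := hφ.add_eq_add_of_square hs (right := ⟨fun t => s (1, t), by fun_prop⟩) hb (fun _ => rfl)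
    (left := ⟨fun t => s (1, t), by fun_prop⟩) (fun t => (hloop t).symm) ht
  rwa [add_comm, add_right_inj] at this

theorem IsPathCocycle.eq_of_lineMap_mem {E : Type*} [AddCommGroup E] [Module ℝ E]
    [TopologicalSpace E] [IsTopologicalAddGroup E] [ContinuousSMul ℝ E] {p : E → Prop}
    {φ : C(I, {x // p x}) → A} (hφ : IsPathCocycle φ) {γ γ' : C(I, {x // p x})}
    (hγ : γ 0 = γ 1) (hγ' : γ' 0 = γ' 1)
    (hp : ∀ t s : I, p (AffineMap.lineMap (γ t : E) (γ' t : E) (s : ℝ))) : φ γ = φ γ' := by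
  refine hφ.eq_of_homotopy_of_loop (s := fun z => ⟨_, hp z.1 z.2⟩) (.subtype_mk ?_ _)
    (fun t => ?_) (fun t => ?_) (fun t => ?_)
  · simp only [AffineMap.lineMap_apply_module']
    fun_prop
  all_goals apply Subtype.ext; simp [hγ, hγ']

theorem IsPathCocycle.eq_zero_of_isOpen_union {φ : C(I, X) → A} (hφ : IsPathCocycle φ)
    {U V : Set X} (hU : IsOpen U) (hV : IsOpen V) (hUV : ∀ x, x ∈ U ∨ x ∈ V) {f g : X → A}
    (hf : ∀ γ : C(I, X), (∀ t, γ t ∈ U) → φ γ = f (γ 1) - f (γ 0))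
    (hg : ∀ γ : C(I, X), (∀ t, γ t ∈ V) → φ γ = g (γ 1) - g (γ 0)) {κ : A}
    (hκ : ∀ x ∈ U, x ∈ V → f x = g x + κ) {γ : C(I, X)} (hγ : γ 0 = γ 1) : φ γ = 0 := by
  classical
  let F : X → A := fun x => if x ∈ U then f x else g x + κ
  have F_eq (x) (hx : x ∈ V) : F x = g x + κ := by
    by_cases hxU : x ∈ U
    · simp only [F, if_pos hxU, hκ x hxU hx]
    · simp only [F, if_neg hxU]
  have := hφ.eq_sub_of_isOpen_cover (U := fun b : Bool => if b then U else V) (f := F)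
    (by simp [hU, hV]) (by simpa [or_comm] using hUV) (fun b γ hγ => ?_) γ
  · rw [this, hγ, sub_self]
  · cases b
    · rw [F_eq _ (hγ 0), F_eq _ (hγ 1), add_sub_add_right_eq_sub, hg γ hγ]
    · rw [hf γ hγ]
      simp only [F, if_pos (show γ _ ∈ U from hγ _)]

end Homotopy

section PuncturedPlane

theorem exists_eq_min_add_ite_of_eq_of_disjoint_Icc {A : Type*} [AddCommGroup A] {E : Finset ℝ}
    {a : ℝ} (hE : ∀ e ∈ E, e < a) {H : ℝ → A}
    (hH : ∀ x y, x ≤ y → (∀ t ∈ Set.Icc x y, t ∉ insert a E) → H x = H y) :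
    ∃ b < a, ∃ d, ∀ x ∉ insert a E, H x = H (min x b) + if a < x then d else 0 := by
  obtain ⟨b, hEb, hba⟩ : ∃ b, (∀ e ∈ E, e < b) ∧ b < a :=
    (((E.eventually_all).2 fun e he => eventually_nhdsWithin_of_eventually_nhds
      (lt_mem_nhds (hE e he))).and self_mem_nhdsWithin).exists (f := nhdsWithin a (Set.Iio a))
  simp only [Finset.mem_insert, not_or] at hH ⊢
  refine ⟨b, hba, H (a + 1) - H b, fun x hx => ?_⟩
  rcases lt_or_gt_of_ne hx.1 with hxa | hxa
  · rw [if_neg hxa.not_gt, add_zero]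
    refine (hH _ _ (min_le_left x b) fun t ht => ⟨(ht.2.trans_lt hxa).ne, fun htE => ?_⟩).symm
    rcases min_le_iff.1 ht.1 with h | h
    · exact hx.2 (ht.2.antisymm h ▸ htE)
    · exact (hEb t htE).not_ge h
  · have beyond (y z) (hy : a < y) (hyz : y ≤ z) : H y = H z :=
      hH y z hyz fun t ht =>
        ⟨(hy.trans_le ht.1).ne', fun htE => ((hE t htE).trans (hy.trans_le ht.1)).false⟩
    rw [if_pos hxa, min_eq_right (hba.trans hxa).le, add_sub_cancel]
    rcases le_total x (a + 1) with h | h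
    · exact beyond _ _ hxa h
    · exact (beyond _ _ (lt_add_one a) h).symm

theorem exists_eq_sum_ite_of_eq_of_disjoint_Icc {A : Type*} [AddCommGroup A] (E : Finset ℝ)
    {H : ℝ → A} (hH : ∀ x y, x ≤ y → (∀ t ∈ Set.Icc x y, t ∉ E) → H x = H y) :
    ∃ (κ : A) (c : ℝ → A), ∀ x ∉ E, H x = κ + ∑ e ∈ E, if e < x then c e else 0 := by
  induction E using Finset.induction_on_max generalizing H with
  | empty =>
    refine ⟨H 0, 0, fun x _ => ?_⟩
    rcases le_total x 0 with hx | hx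
    · simp [hH x 0 hx]
    · simp [hH 0 x hx]
  | insert a E hE ih =>
    obtain ⟨b, hba, d, hd⟩ := exists_eq_min_add_ite_of_eq_of_disjoint_Icc hE hH
    obtain ⟨κ, c, hc⟩ := ih (H := fun x => H (min x b)) fun x y hxy hE' => by
      rcases le_total b x with hx | hx
      · simp only [min_eq_right hx, min_eq_right (hx.trans hxy)]
      · refine hH _ _ (min_le_min_right b hxy) fun t ht => ?_
        rw [min_eq_left hx, Set.mem_Icc, le_min_iff] at ht
        rw [Finset.mem_insert, not_or]
        exact ⟨(ht.2.2.trans_lt hba).ne, hE' t ⟨ht.1, ht.2.1⟩⟩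
    have a_notMem : a ∉ E := fun h => (hE a h).false
    refine ⟨κ, Function.update c a d, fun x hx => ?_⟩
    have below : ∑ e ∈ E, (if e < x then Function.update c a d e else 0) =
        ∑ e ∈ E, if e < x then c e else 0 :=
      Finset.sum_congr rfl fun e he => by
        rw [Function.update_of_ne (ne_of_mem_of_not_mem he a_notMem)]
    rw [Finset.sum_insert a_notMem, below, Function.update_self, hd x hx,
      hc x fun h => hx (Finset.mem_insert_of_mem h)]
    abel

variable {ι : Type*}

/-- The complex plane without the points `z i`. -/
abbrev PuncturedPlane (z : ι → ℂ) : Type := {u : ℂ // ∀ i, u ≠ z i}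

/-- The plane cut along the vertical rays starting at the points `z i`, which point upwards for
`0 < ε` and downwards for `ε < 0`. -/
def rayComplement (z : ι → ℂ) (ε : ℝ) : Set ℂ :=
  {u | ∀ i, u.re = (z i).re → ε * u.im < ε * (z i).im}

theorem ne_of_mem_rayComplement {z : ι → ℂ} {ε : ℝ} {u : ℂ} (hu : u ∈ rayComplement z ε) (i : ι) :
    u ≠ z i := by
  rintro rfl
  exact (hu i rfl).false

theorem mem_rayComplement_of_re_ne {z : ι → ℂ} {u : ℂ} (hu : ∀ i, u.re ≠ (z i).re) (ε : ℝ) :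
    u ∈ rayComplement z ε :=
  fun i hi => (hu i hi).elim

theorem re_ne_of_mem_rayComplement {z : ι → ℂ} {u : ℂ} (h₁ : u ∈ rayComplement z 1)
    (h₂ : u ∈ rayComplement z (-1)) (i : ι) : u.re ≠ (z i).re :=
  fun hi => by linarith [h₁ i hi, h₂ i hi]

theorem mem_rayComplement_or_of_injective_re {z : ι → ℂ}
    (hz : Function.Injective fun i => (z i).re) (u : PuncturedPlane z) :
    (u : ℂ) ∈ rayComplement z 1 ∨ (u : ℂ) ∈ rayComplement z (-1) := by
  by_cases hu : ∀ i, u.1.re ≠ (z i).re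
  · exact .inl (mem_rayComplement_of_re_ne hu 1)
  · push Not at hu
    obtain ⟨i, hi⟩ := hu
    have only (j) (hj : u.1.re = (z j).re) : j = i := hz (hj.symm.trans hi)
    rcases lt_or_gt_of_ne fun h => u.2 i (Complex.ext hi h) with h | h
    · exact .inl fun j hj => by rw [only j hj]; linarith
    · exact .inr fun j hj => by rw [only j hj]; linarith

section Finite

variable [Finite ι]

theorem isOpen_rayComplement (z : ι → ℂ) (ε : ℝ) : IsOpen (rayComplement z ε) := by
  have : rayComplement z ε =
      ⋂ i, ({u | u.re ≠ (z i).re} ∪ {u | ε * u.im < ε * (z i).im}) := by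
    ext u
    simp [rayComplement, imp_iff_not_or]
  rw [this]
  exact isOpen_iInter_of_finite fun i => (isOpen_ne_fun (by fun_prop) (by fun_prop)).union
    (isOpen_lt (by fun_prop) (by fun_prop))

theorem exists_im_forall_mem_rayComplement (z : ι → ℂ) {ε : ℝ} (hε : ε ≠ 0) :
    ∃ l : ℝ, ∀ i, ε * l < ε * (z i).im := by
  obtain ⟨m, hm⟩ := (Set.finite_range fun i => ε * (z i).im).bddBelow
  refine ⟨(m - 1) / ε, fun i => ?_⟩
  rw [mul_div_cancel₀ _ hε]
  linarith [hm ⟨i, rfl⟩]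

theorem IsPathCocycle.eq_zero_of_mem_rayComplement {A : Type*} [AddCommGroup A] {z : ι → ℂ} {ε : ℝ}
    (hε : ε ≠ 0) {φ : C(I, PuncturedPlane z) → A} (hφ : IsPathCocycle φ)
    {γ : C(I, PuncturedPlane z)} (hγ : ∀ t, (γ t : ℂ) ∈ rayComplement z ε) (hloop : γ 0 = γ 1) :
    φ γ = 0 := by
  obtain ⟨l, hl⟩ := exists_im_forall_mem_rayComplement z hε
  have level (x : ℝ) : (x + l * Complex.I : ℂ) ∈ rayComplement z ε :=
    fun i _ => by simpa using hl i
  let γ' : C(I, PuncturedPlane z) :=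
    ⟨fun t => ⟨_, ne_of_mem_rayComplement (level (γ t).1.re)⟩, by fun_prop⟩
  have hγ' : γ' 0 = γ' 1 := by simp [γ', hloop]
  have slide : φ γ = φ γ' := by
    refine hφ.eq_of_lineMap_mem hloop hγ' fun t s => ne_of_mem_rayComplement (ε := ε) fun i hi => ?_
    simp only [γ', AffineMap.lineMap_apply_module, ContinuousMap.coe_mk, Complex.add_re,
      Complex.add_im, Complex.smul_re, Complex.smul_im, Complex.ofReal_re, Complex.ofReal_im,
      Complex.re_ofReal_mul, Complex.im_ofReal_mul, Complex.I_re, Complex.I_im, mul_zero, mul_one,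
      add_zero, zero_add, smul_eq_mul] at hi ⊢
    have hre : (γ t).1.re = (z i).re := by linear_combination hi
    have := (convex_Iio (ε * (z i).im)).lineMap_mem (hγ t i hre) (hl i) s.2
    rw [Set.mem_Iio, AffineMap.lineMap_apply_module] at this
    simp only [smul_eq_mul] at this
    linarith
  have shrink : φ γ' = φ (.const I (γ' 0)) := by
    refine hφ.eq_of_lineMap_mem hγ' rfl fun t s => ne_of_mem_rayComplement (ε := ε) ?_
    convert level (AffineMap.lineMap (γ t).1.re (γ 0).1.re (s : ℝ)) using 1
    apply Complex.ext <;> simp [γ', AffineMap.lineMap_apply_module]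
    ring
  rw [slide, shrink, hφ.const]

end Finite

theorem logIncrement_sub_eq_of_mem_rayComplement {z : ι → ℂ} {ε : ℝ} (hε : ε ≠ 0) (i : ι)
    {γ : C(I, PuncturedPlane z)} (hγ : ∀ t, (γ t : ℂ) ∈ rayComplement z ε) :
    logIncrement (fun t => (γ t).1 - z i) =
      Complex.log (ε * Complex.I * (γ 1 - z i)) - Complex.log (ε * Complex.I * (γ 0 - z i)) := by
  have a_ne : (ε * Complex.I : ℂ) ≠ 0 := by simp [hε]
  have mem_slit (t) : ε * Complex.I * ((γ t).1 - z i) ∈ Complex.slitPlane := by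
    rw [Complex.mem_slitPlane_iff]
    by_cases h : (γ t).1.re = (z i).re
    · left
      have := hγ t i h
      simp [mul_sub, this]
    · right
      simp [hε, sub_eq_zero, h]
  rw [← logIncrement_const_mul a_ne (by fun_prop) fun t => sub_ne_zero.2 ((γ t).2 i)]
  exact logIncrement_eq_sub (L := fun t => Complex.log (ε * Complex.I * ((γ t).1 - z i)))
    (Continuous.clog (by fun_prop) mem_slit)
    fun t => Complex.exp_log (Complex.slitPlane_ne_zero (mem_slit t))

theorem exists_sub_eq_add_sum_ite [Fintype ι] {z : ι → ℂ}
    (hz : Function.Injective fun i => (z i).re) {φ : C(I, PuncturedPlane z) → ℂ}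
    {f g : PuncturedPlane z → ℂ}
    (hf : ∀ γ : C(I, PuncturedPlane z), (∀ t, (γ t : ℂ) ∈ rayComplement z 1) →
      φ γ = f (γ 1) - f (γ 0))
    (hg : ∀ γ : C(I, PuncturedPlane z), (∀ t, (γ t : ℂ) ∈ rayComplement z (-1)) →
      φ γ = g (γ 1) - g (γ 0)) :
    ∃ (κ : ℂ) (c : ι → ℂ), ∀ u : PuncturedPlane z, (∀ i, u.1.re ≠ (z i).re) →
      f u - g u = κ + ∑ i, if (z i).re < u.1.re then c i else 0 := by
  classical
  have ne_of_re_ne {u : ℂ} (hu : ∀ i, u.re ≠ (z i).re) (i : ι) : u ≠ z i :=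
    ne_of_mem_rayComplement (mem_rayComplement_of_re_ne hu 1) i
  have constant (u v : PuncturedPlane z)
      (huv : ∀ (t : I) (i : ι), AffineMap.lineMap u.1.re v.1.re (t : ℝ) ≠ (z i).re) :
      f u - g u = f v - g v := by
    have re_ne (t : I) (i : ι) : (AffineMap.lineMap u.1 v.1 (t : ℝ)).re ≠ (z i).re := by
      simpa [AffineMap.lineMap_apply_module] using huv t i
    let γ : C(I, PuncturedPlane z) :=
      ⟨fun t => ⟨_, ne_of_re_ne (re_ne t)⟩, .subtype_mk (by
        simp only [AffineMap.lineMap_apply_module]; fun_prop) _⟩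
    have γ_zero : γ 0 = u := by simp [γ]
    have γ_one : γ 1 = v := by simp [γ]
    have := (hf γ fun t => mem_rayComplement_of_re_ne (re_ne t) _).symm.trans
      (hg γ fun t => mem_rayComplement_of_re_ne (re_ne t) _)
    rw [γ_zero, γ_one] at this
    linear_combination -this
  let H (x : ℝ) : ℂ := if hx : ∀ i, x ≠ (z i).re then
    f ⟨x, ne_of_re_ne (by simpa using hx)⟩ - g ⟨x, ne_of_re_ne (by simpa using hx)⟩ else 0
  obtain ⟨κ, c, hc⟩ := exists_eq_sum_ite_of_eq_of_disjoint_Icc (H := H)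
    (Finset.univ.image fun i => (z i).re) fun x y hxy hE => by
      have avoid {t} (ht : t ∈ Set.Icc x y) (i) : t ≠ (z i).re :=
        fun h => hE t ht (Finset.mem_image.2 ⟨i, Finset.mem_univ i, h.symm⟩)
      simp only [H, dif_pos (avoid (Set.left_mem_Icc.2 hxy)),
        dif_pos (avoid (Set.right_mem_Icc.2 hxy))]
      have between (t : I) : AffineMap.lineMap x y (t : ℝ) ∈ Set.Icc x y := by
        rw [← segment_eq_Icc hxy, segment_eq_image_lineMap]
        exact ⟨t, t.2, rfl⟩
      exact constant _ _ fun t => avoid (between t)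
  refine ⟨κ, fun i => c (z i).re, fun u hu => ?_⟩
  have H_eq : f u - g u = H u.1.re := by
    simp only [H, dif_pos hu]
    refine constant _ _ fun t i => ?_
    simpa [AffineMap.lineMap_same_apply] using hu i
  rw [H_eq, hc _ (by simpa [eq_comm] using hu), Finset.sum_image hz.injOn]

theorem IsPathCocycle.exists_eq_sum_logIncrement_of_injective_re [Fintype ι] {z : ι → ℂ}
    (hz : Function.Injective fun i => (z i).re) {φ : C(I, PuncturedPlane z) → ℂ}
    (hφ : IsPathCocycle φ) :
    ∃ c : ι → ℂ, ∀ γ, γ 0 = γ 1 → φ γ = ∑ i, c i * logIncrement (fun t => (γ t).1 - z i) := by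
  obtain ⟨f, hf⟩ := hφ.exists_primitive_on {u | u.1 ∈ rayComplement z 1} fun γ hγ hloop =>
    hφ.eq_zero_of_mem_rayComplement one_ne_zero hγ hloop
  obtain ⟨g, hg⟩ := hφ.exists_primitive_on {u | u.1 ∈ rayComplement z (-1)} fun γ hγ hloop =>
    hφ.eq_zero_of_mem_rayComplement (neg_ne_zero.2 one_ne_zero) hγ hloop
  obtain ⟨κ, jump, hjump⟩ := exists_sub_eq_add_sum_ite hz hf hg
  -- Crossing the vertical line through `z i` changes the difference of the two branches of
  -- `log (u - z i)`, cut upwards and downwards, by `2πi`; this `c i` matches it with the jump.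
  let c (i : ι) : ℂ := jump i / (2 * Real.pi * Complex.I)
  let ℓ (ε : ℂ) (u : PuncturedPlane z) : ℂ :=
    ∑ i, c i * Complex.log (ε * Complex.I * (u - z i))
  let ψ : C(I, PuncturedPlane z) → ℂ :=
    φ - ∑ i, c i • fun γ => logIncrement fun t => (γ t).1 - z i
  have hψ : IsPathCocycle ψ := hφ.sub <| .sum _ fun i _ => .smul (isPathCocycle_logIncrement
    (g := fun u : PuncturedPlane z => u.1 - z i) (by fun_prop) fun u => sub_ne_zero.2 (u.2 i)) _
  have ψ_eq {ε : ℝ} (hε : ε ≠ 0) {h : PuncturedPlane z → ℂ} {γ : C(I, PuncturedPlane z)}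
      (hγ : ∀ t, (γ t : ℂ) ∈ rayComplement z ε) (hφγ : φ γ = h (γ 1) - h (γ 0)) :
      ψ γ = (h (γ 1) - ℓ ε (γ 1)) - (h (γ 0) - ℓ ε (γ 0)) := by
    simp only [ψ, ℓ, Pi.sub_apply, Finset.sum_apply, Pi.smul_apply, smul_eq_mul, hφγ,
      logIncrement_sub_eq_of_mem_rayComplement hε _ hγ, mul_sub, Finset.sum_sub_distrib]
    ring
  have isOpen (ε : ℝ) : IsOpen {u : PuncturedPlane z | u.1 ∈ rayComplement z ε} :=
    (isOpen_rayComplement z ε).preimage continuous_subtype_val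
  have ℓ_sub (u : PuncturedPlane z) (hu : ∀ i, u.1.re ≠ (z i).re) : ℓ 1 u - ℓ (-1) u =
      (∑ i, if (z i).re < u.1.re then jump i else 0) - ∑ i, c i * (Real.pi * Complex.I) := by
    simp only [ℓ, ← Finset.sum_sub_distrib]
    refine Finset.sum_congr rfl fun i _ => ?_
    have re_ne : (u.1 - z i).re ≠ 0 := by simpa [sub_eq_zero] using hu i
    rw [one_mul, neg_one_mul, ← mul_sub, log_I_mul_sub_log_neg_I_mul re_ne, mul_sub, mul_ite,
      mul_zero, div_mul_cancel₀ _ Complex.two_pi_I_ne_zero]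
    simp only [Complex.sub_re, sub_pos]
  refine ⟨c, fun γ hγ => sub_eq_zero.1 ?_⟩
  have := hψ.eq_zero_of_isOpen_union (isOpen 1) (isOpen (-1))
    (mem_rayComplement_or_of_injective_re hz)
    (f := fun u => f u - ℓ 1 u) (g := fun u => g u - ℓ (-1) u)
    (fun γ hγ => by simpa using ψ_eq one_ne_zero hγ (hf γ hγ))
    (fun γ hγ => by simpa using ψ_eq (neg_ne_zero.2 one_ne_zero) hγ (hg γ hγ))
    (κ := κ + ∑ i, c i * (Real.pi * Complex.I))
    (fun u hu₁ hu₂ => by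
      have re_ne := re_ne_of_mem_rayComplement hu₁ hu₂
      linear_combination hjump u re_ne - ℓ_sub u re_ne) hγ
  simpa [ψ] using this

end PuncturedPlane

section InvPuncturedPlane

variable {ι : Type*}

theorem exists_injective_re_mul [Finite ι] {z : ι → ℂ} (hz : Function.Injective z) :
    ∃ d : ℂ, d ≠ 0 ∧ Function.Injective fun i => (d * z i).re := by
  have slopes_finite :
      (Set.range fun x : ι × ι => (z x.1 - z x.2).re / (z x.1 - z x.2).im).Finite :=
    Set.finite_range _
  obtain ⟨t, ht⟩ := slopes_finite.infinite_compl.nonempty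
  refine ⟨⟨1, t⟩, fun h => by simpa using congrArg Complex.re h, fun i j hij => ?_⟩
  have hre : (z i - z j).re = t * (z i - z j).im := by
    simp only [Complex.mul_re, one_mul] at hij
    simp only [Complex.sub_re, Complex.sub_im]
    linarith
  have him : (z i - z j).im = 0 := by
    by_contra him
    exact ht ⟨(i, j), by simp only [hre, mul_div_cancel_right₀ _ him]⟩
  exact hz (sub_eq_zero.1 (Complex.ext (by simp [hre, him]) him))

/-- The complex plane without the inverses of the nonzero `lam i`. -/
abbrev InvPuncturedPlane (lam : ι → ℂ) : Type := {u : ℂ // ∀ i, 1 - lam i * u ≠ 0}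

theorem IsPathCocycle.exists_eq_sum_logIncrement [Fintype ι] {lam : ι → ℂ}
    (hlam : Function.Injective lam) {φ : C(I, InvPuncturedPlane lam) → ℂ} (hφ : IsPathCocycle φ) :
    ∃ c : ι → ℂ, ∀ γ, γ 0 = γ 1 →
      φ γ = ∑ i, c i * logIncrement fun t => 1 - lam i * (γ t : ℂ) := by
  classical
  obtain ⟨d, hd, re_injective⟩ := exists_injective_re_mul
    (z := fun i : {i // lam i ≠ 0} => (lam i)⁻¹)
    (inv_injective.comp (hlam.comp Subtype.val_injective))
  set z : {i // lam i ≠ 0} → ℂ := fun i => d * (lam i)⁻¹ with hz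
  have factor (i : {i // lam i ≠ 0}) (u : ℂ) : 1 - lam i * u = -lam i / d * (d * u - z i) := by
    have := i.2
    simp only [hz]
    field_simp
    ring
  have factor_ne (i : {i // lam i ≠ 0}) : -lam i / d ≠ 0 := div_ne_zero (neg_ne_zero.2 i.2) hd
  have ne_of_ne {u : ℂ} (hu : ∀ i, 1 - lam i * u ≠ 0) (i) : d * u ≠ z i := fun h =>
    hu i (by rw [factor, h, sub_self, mul_zero])
  have ne_div_of_ne {w : ℂ} (hw : ∀ i, w ≠ z i) (i) : 1 - lam i * (w / d) ≠ 0 := by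
    by_cases hi : lam i = 0
    · simp [hi]
    · rw [factor ⟨i, hi⟩, mul_div_cancel₀ _ hd]
      exact mul_ne_zero (factor_ne ⟨i, hi⟩) (sub_ne_zero.2 (hw _))
  obtain ⟨c, hc⟩ := (hφ.comp ⟨fun w : PuncturedPlane z => ⟨w / d, ne_div_of_ne w.2⟩,
    by fun_prop⟩).exists_eq_sum_logIncrement_of_injective_re re_injective
  refine ⟨fun i => if hi : lam i ≠ 0 then c ⟨i, hi⟩ else 0, fun γ hγ => ?_⟩
  have hφγ := hc ⟨fun t => ⟨d * γ t, ne_of_ne (γ t).2⟩, by fun_prop⟩ (by simp [hγ])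
  convert hφγ using 1
  · congr 1
    ext t
    simp [hd]
  · rw [← Fintype.sum_subtype_add_sum_subtype (lam · ≠ 0), add_eq_left.2]
    · refine Fintype.sum_congr _ _ fun i => ?_
      simp only [dif_pos i.2, factor]
      rw [logIncrement_const_mul (factor_ne i) (by fun_prop)
        fun t => sub_ne_zero.2 (ne_of_ne (γ t).2 i)]
      rfl
    · exact Fintype.sum_eq_zero _ fun i => by simp [i.2]

end InvPuncturedPlane

/-! ### Cocycles on cyclic coverings of products -/

section Product

variable {X Y A : Type*} [TopologicalSpace X] [TopologicalSpace Y] [AddCommGroup A]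
  {φ : C(I, X × Y) → A}

theorem IsPathCocycle.prodMk_eq_add (hφ : IsPathCocycle φ) (α : C(I, X)) (β : C(I, Y)) :
    φ (α.prodMk β) =
      φ (α.prodMk (.const I (β 0))) + φ ((ContinuousMap.const I (α 1)).prodMk β) := by
  have := hφ.add_eq_add_of_square (s := fun z => (α z.1, β (z.1 * z.2))) (by fun_prop)
    (bottom := α.prodMk (.const I (β 0))) (right := (ContinuousMap.const I (α 1)).prodMk β)
    (left := .const I (α 0, β 0)) (top := α.prodMk β) (by simp) (by simp) (by simp) (by simp)
  rwa [hφ.const, zero_add, eq_comm] at this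

theorem IsPathCocycle.prodMk_const_add (hφ : IsPathCocycle φ) (α : C(I, X)) (β : C(I, Y)) :
    φ (α.prodMk (.const I (β 0))) + φ ((ContinuousMap.const I (α 1)).prodMk β) =
      φ ((ContinuousMap.const I (α 0)).prodMk β) + φ (α.prodMk (.const I (β 1))) :=
  hφ.add_eq_add_of_square (s := fun z => (α z.1, β z.2)) (by fun_prop)
    (fun _ => rfl) (fun _ => rfl) (fun _ => rfl) (fun _ => rfl)

theorem IsPathCocycle.exists_eq_add_of_loop [PathConnectedSpace X] [PathConnectedSpace Y]
    (hφ : IsPathCocycle φ) :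
    ∃ (χ : C(I, X) → A) (ψ : C(I, Y) → A), IsPathCocycle χ ∧ IsPathCocycle ψ ∧
      ∀ α β, α 0 = α 1 → β 0 = β 1 → φ (α.prodMk β) = χ α + ψ β := by
  obtain ⟨⟨x⟩, ⟨y⟩⟩ := (inferInstance : Nonempty X), (inferInstance : Nonempty Y)
  refine ⟨_, _, hφ.comp ((ContinuousMap.id X).prodMk (.const X y)),
    hφ.comp ((ContinuousMap.const Y x).prodMk (.id Y)), fun α β hα hβ => ?_⟩
  obtain ⟨c, hc₀, hc₁⟩ : ∃ c : C(I, X), c 0 = x ∧ c 1 = α 1 :=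
    ⟨(PathConnectedSpace.joined x (α 1)).somePath, Path.source _, Path.target _⟩
  obtain ⟨d, hd₀, hd₁⟩ : ∃ d : C(I, Y), d 0 = y ∧ d 1 = β 0 :=
    ⟨(PathConnectedSpace.joined y (β 0)).somePath, Path.source _, Path.target _⟩
  have move_left := hφ.prodMk_const_add α d
  have move_right := hφ.prodMk_const_add c β
  rw [hd₀, hd₁, hα, add_comm, add_left_cancel_iff] at move_left
  rw [hc₀, hc₁, ← hβ, add_comm, add_right_cancel_iff] at move_right
  rw [hφ.prodMk_eq_add, ← move_left, move_right]
  rfl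

end Product

section Transfer

variable {G X Y A : Type*} [TopologicalSpace X] [TopologicalSpace Y] [AddCommGroup A] [Group G]
  [Fintype G] [MulAction G X] [ContinuousConstSMul G X]

theorem IsPathCocycle.exists_transfer {p : C(X, Y)}
    (exists_lift : ∀ s : C(I × I, Y), ∃ s' : C(I × I, X), p.comp s' = s)
    (exists_smul_eq : ∀ γ γ' : C(I, X), p.comp γ = p.comp γ' → ∃ g : G, g • γ = γ')
    {φ : C(I, X) → A} (hφ : IsPathCocycle φ) :
    ∃ ψ : C(I, Y) → A, IsPathCocycle ψ ∧ ∀ γ, ψ (p.comp γ) = ∑ g : G, φ (g • γ) := by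
  have exists_path_lift (η : C(I, Y)) : ∃ γ : C(I, X), p.comp γ = η := by
    obtain ⟨s', hs'⟩ := exists_lift (η.comp .fst)
    exact ⟨s'.comp ((ContinuousMap.id I).prodMk (.const I 0)),
      ContinuousMap.ext fun t => DFunLike.congr_fun hs' (t, 0)⟩
  choose lift hlift using exists_path_lift
  have apply_comp (γ : C(I, X)) : ∑ g : G, φ (g • lift (p.comp γ)) = ∑ g : G, φ (g • γ) := by
    obtain ⟨h, hh⟩ := exists_smul_eq _ _ (hlift (p.comp γ)).symm
    exact Fintype.sum_equiv (Equiv.mulRight h) _ _ fun g => by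
      rw [Equiv.coe_mulRight, mul_smul, hh]
  refine ⟨fun η => ∑ g : G, φ (g • lift η), ⟨fun y => ?_, fun s => ?_⟩, apply_comp⟩
  · have hy : p (lift (.const I y) 0) = y := DFunLike.congr_fun (hlift (.const I y)) 0
    have := apply_comp (.const I (lift (.const I y) 0))
    rw [ContinuousMap.comp_const, hy] at this
    exact this.trans (Fintype.sum_eq_zero _ fun g => hφ.const (g • lift (.const I y) 0))
  · obtain ⟨s', rfl⟩ := exists_lift s
    have bottom := apply_comp ⟨fun t => s' (t, 0), by fun_prop⟩
    have right := apply_comp ⟨fun t => s' (1, t), by fun_prop⟩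
    have left := apply_comp ⟨fun t => s' (0, t), by fun_prop⟩
    have top := apply_comp ⟨fun t => s' (t, 1), by fun_prop⟩
    refine (congrArg₂ (· + ·) bottom right).trans (.trans ?_ (congrArg₂ (· + ·) left top).symm)
    simp only [← Finset.sum_add_distrib]
    exact Fintype.sum_congr _ _ fun g => hφ.square (g • s')

end Transfer

section Monodromy

variable {X Y A : Type*} [TopologicalSpace X] [TopologicalSpace Y] [AddCommGroup A]
  [AddAction ℤ X] [ContinuousConstVAdd ℤ X] [AddAction ℤ Y] [ContinuousConstVAdd ℤ Y]

theorem IsPathCocycle.one_vadd_prodMk_eq {φ : C(I, X × Y) → A} (hφ : IsPathCocycle φ)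
    (vadd_prodMk : ∀ (k : ℤ) (α : C(I, X)) (β : C(I, Y)),
      φ ((k +ᵥ α).prodMk β) = φ (α.prodMk (k +ᵥ β)))
    (hX : ∀ x : X, Joined x ((1 : ℤ) +ᵥ x)) (hY : ∀ y : Y, Joined y ((1 : ℤ) +ᵥ y)) {a b : ℤ}
    (hab : ∀ (α : C(I, X)) (β : C(I, Y)), φ (((a + b) +ᵥ α).prodMk β) = φ (α.prodMk β))
    {α : C(I, X)} {β : C(I, Y)} (hα : α 1 = a +ᵥ α 0) (hβ : β 1 = b +ᵥ β 0) :
    φ (((1 : ℤ) +ᵥ α).prodMk β) = φ (α.prodMk β) := by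
  have vadd_path (m n : ℤ) (ε : C(I, X)) : m +ᵥ n +ᵥ ε = (m + n) +ᵥ ε :=
    ContinuousMap.ext fun t => vadd_vadd m n (ε t)
  have zero_vadd_path (ε : C(I, X)) : (0 : ℤ) +ᵥ ε = ε :=
    ContinuousMap.ext fun t => zero_vadd ℤ (ε t)
  obtain ⟨c, hc₀, hc₁⟩ : ∃ c : C(I, X), c 0 = α 0 ∧ c 1 = (1 : ℤ) +ᵥ α 0 :=
    ⟨(hX (α 0)).somePath, Path.source _, Path.target _⟩
  obtain ⟨d, hd₀, hd₁⟩ : ∃ d : C(I, Y), d 0 = β 0 ∧ d 1 = (1 : ℤ) +ᵥ β 0 :=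
    ⟨(hY (β 0)).somePath, Path.source _, Path.target _⟩
  have sum_d (ε : C(I, X)) :
      φ (ε.prodMk (.const I (β 0))) + φ ((ContinuousMap.const I (ε 1)).prodMk d) =
        φ ((ContinuousMap.const I (ε 0)).prodMk d) +
          φ (((1 : ℤ) +ᵥ ε).prodMk (.const I (β 0))) := by
    have := hφ.prodMk_const_add ε d
    rw [hd₀, hd₁] at this
    exact this.trans (congrArg _ (vadd_prodMk 1 ε (.const I (β 0))).symm)
  -- The two sides of the claim differ by `defect a - defect 0`.
  let defect (k : ℤ) : A := φ ((ContinuousMap.const I (k +ᵥ α 0)).prodMk d) -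
    φ ((k +ᵥ c).prodMk (.const I (β 0)))
  have defect_periodic : Function.Periodic defect 1 := fun k => by
    have := sum_d (k +ᵥ c)
    simp only [ContinuousMap.vadd_apply, hc₀, hc₁, vadd_vadd, vadd_path] at this
    rw [sub_eq_sub_iff_add_eq_add, add_comm, this, add_comm k]
  have defect_eq : defect (a * 1) = defect 0 := defect_periodic.int_mul_eq a
  have hc : φ ((a +ᵥ c).prodMk (.const I (b +ᵥ β 0))) = φ (c.prodMk (.const I (β 0))) := by
    rw [← hab c, add_comm a b, ← vadd_path b a]
    exact (vadd_prodMk b (a +ᵥ c) (.const I (β 0))).symm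
  have split_shift := hφ.prodMk_eq_add ((1 : ℤ) +ᵥ α) β
  have split := hφ.prodMk_eq_add α β
  have sum_β := hφ.prodMk_const_add (a +ᵥ c) β
  have sum_d := sum_d α
  simp only [defect, ContinuousMap.vadd_apply, hα, hβ, hc₀, hc₁, hc, vadd_vadd, mul_one,
    zero_vadd, zero_vadd_path, add_comm (1 : ℤ) a] at split_shift split sum_β sum_d defect_eq
  grind

theorem IsPathCocycle.vadd_prodMk_eq {φ : C(I, X × Y) → A} (hφ : IsPathCocycle φ)
    (vadd_prodMk : ∀ (k : ℤ) (α : C(I, X)) (β : C(I, Y)),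
      φ ((k +ᵥ α).prodMk β) = φ (α.prodMk (k +ᵥ β)))
    (hX : ∀ x : X, Joined x ((1 : ℤ) +ᵥ x)) (hY : ∀ y : Y, Joined y ((1 : ℤ) +ᵥ y)) {a b : ℤ}
    (hab : ∀ (α : C(I, X)) (β : C(I, Y)), φ (((a + b) +ᵥ α).prodMk β) = φ (α.prodMk β))
    {α : C(I, X)} {β : C(I, Y)} (hα : α 1 = a +ᵥ α 0) (hβ : β 1 = b +ᵥ β 0) (k : ℤ) :
    φ ((k +ᵥ α).prodMk β) = φ (α.prodMk β) := by
  have periodic : Function.Periodic (fun k : ℤ => φ ((k +ᵥ α).prodMk β)) 1 := fun k => by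
    beta_reduce
    rw [← hφ.one_vadd_prodMk_eq vadd_prodMk hX hY hab (α := k +ᵥ α) _ hβ]
    · congr 2
      ext t
      simp only [ContinuousMap.vadd_apply, vadd_vadd, add_comm]
    · simp only [ContinuousMap.vadd_apply, hα, vadd_vadd, add_comm]
  convert periodic.int_mul_eq k using 3
  · rw [mul_one, Int.cast_id]
  · exact ContinuousMap.ext fun t => (zero_vadd ℤ (α t)).symm

end Monodromy

section RootCover

variable {Y : Type*} {n : ℕ} {g : Y → ℂ}

/-- The cyclic covering of `Y` parametrizing the `n`-th roots of `(g y)⁻¹`. -/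
abbrev RootCover (n : ℕ) (g : Y → ℂ) : Type _ := {x : ℂ × Y // x.1 ^ n * g x.2 = 1}

namespace RootCover

instance : MulAction (rootsOfUnity n ℂ) (RootCover n g) where
  smul ζ x := ⟨(((ζ : ℂˣ) : ℂ) * x.1.1, x.1.2), by
    rw [mul_pow, ← Units.val_pow_eq_pow_val, (mem_rootsOfUnity _ _).1 ζ.2, Units.val_one, one_mul,
      x.2]⟩
  one_smul x := Subtype.ext (Prod.ext (one_mul _) rfl)
  mul_smul ζ ξ x := Subtype.ext (Prod.ext (mul_assoc _ _ _) rfl)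

theorem fst_ne_zero [NeZero n] (x : RootCover n g) : x.1.1 ≠ 0 := fun h => by
  simpa [h, NeZero.ne n] using x.2

variable [TopologicalSpace Y]

instance : ContinuousConstSMul (rootsOfUnity n ℂ) (RootCover n g) where
  continuous_const_smul ζ :=
    (show Continuous fun x : RootCover n g => (((ζ : ℂˣ) : ℂ) * x.1.1, x.1.2) by
      fun_prop).subtype_mk _

/-- The covering map of `RootCover n g`. -/
def proj (n : ℕ) (g : Y → ℂ) : C(RootCover n g, Y) := ⟨fun x => x.1.2, by fun_prop⟩

variable [NeZero n]

theorem exists_lift_square (hg : Continuous g) (g_ne : ∀ y, g y ≠ 0) (s : C(I × I, Y)) :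
    ∃ s' : C(I × I, RootCover n g), (proj n g).comp s' = s := by
  obtain ⟨L, hL, exp_L⟩ := exists_continuous_log_on_square (hg.comp s.continuous) fun z => g_ne _
  refine ⟨⟨fun z => ⟨(Complex.exp (-L z / n), s z), ?lift_mem z⟩,
    (show Continuous fun z => (Complex.exp (-L z / n), s z) by fun_prop).subtype_mk ?lift_mem⟩,
    rfl⟩
  intro z
  rw [← Complex.exp_nat_mul, mul_div_cancel₀ _ (NeZero.ne (n : ℂ)), Complex.exp_neg, exp_L]
  exact inv_mul_cancel₀ (g_ne _)

theorem exists_smul_eq (γ γ' : C(I, RootCover n g)) (h : (proj n g).comp γ = (proj n g).comp γ') :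
    ∃ ζ : rootsOfUnity n ℂ, ζ • γ = γ' := by
  have snd_eq (t) : (γ t).1.2 = (γ' t).1.2 := DFunLike.congr_fun h t
  let ratio (t : I) : ℂ := (γ' t).1.1 / (γ t).1.1
  have ratio_pow (t) : ratio t ^ n = 1 := by
    rw [div_pow, div_eq_one_iff_eq (pow_ne_zero _ (fst_ne_zero _))]
    refine mul_right_cancel₀ (b := g (γ t).1.2) (fun h0 => ?_) ?_
    · simpa [h0] using (γ t).2
    · rw [(γ t).2, snd_eq, (γ' t).2]
  have ratio_cont : Continuous ratio := by
    have := fun t => fst_ne_zero (γ t)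
    fun_prop (disch := assumption)
  have ratio_const (t) : ratio t = ratio 0 := by
    exact isPreconnected_univ.constant_of_mapsTo
      (Polynomial.nthRootsFinset n (1 : ℂ)).finite_toSet.isDiscrete ratio_cont.continuousOn
      (fun t _ => (Polynomial.mem_nthRootsFinset (NeZero.pos n) 1).2 (ratio_pow t)) trivial trivial
  refine ⟨rootsOfUnity.mkOfPowEq (ratio 0) (ratio_pow 0), ContinuousMap.ext fun t =>
    Subtype.ext (Prod.ext ?_ (snd_eq t))⟩
  change ratio 0 * (γ t).1.1 = (γ' t).1.1
  rw [← ratio_const t, div_mul_cancel₀ _ (fst_ne_zero _)]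

end RootCover

end RootCover

section LogCover

variable {U V A : Type*} [AddCommGroup A] {P : U → ℂ} {Q : V → ℂ}

/-- The infinite cyclic covering of `U` parametrizing the logarithms of `P u`. -/
abbrev LogCover (P : U → ℂ) : Type _ := {x : ℂ × U // Complex.exp x.1 = P x.2}

namespace LogCover

noncomputable instance : AddAction ℤ (LogCover P) where
  vadd k x := ⟨(x.1.1 + k * (2 * Real.pi * Complex.I), x.1.2), by
    rw [Complex.exp_add, Complex.exp_int_mul_two_pi_mul_I, mul_one, x.2]⟩
  zero_vadd x := Subtype.ext (Prod.ext (by change x.1.1 + _ = _; simp) rfl)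
  add_vadd k m x := Subtype.ext (Prod.ext
    (by change x.1.1 + _ = x.1.1 + _ + _; push_cast; ring) rfl)

theorem fst_vadd (k : ℤ) (x : LogCover P) :
    (k +ᵥ x).1.1 = x.1.1 + k * (2 * Real.pi * Complex.I) := rfl

instance [TopologicalSpace U] : ContinuousConstVAdd ℤ (LogCover P) where
  continuous_const_vadd k :=
    (show Continuous fun x : LogCover P => (x.1.1 + k * (2 * Real.pi * Complex.I), x.1.2) by
      fun_prop).subtype_mk _

end LogCover

variable [TopologicalSpace U] [TopologicalSpace V]

/-- The map of coverings of `U × V` induced by `P u * Q v = exp (s + σ)` on logarithms `s` of `P u`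
and `σ` of `Q v`. -/
noncomputable def rootOfLogs (n : ℕ) [NeZero n] (P : U → ℂ) (Q : V → ℂ) :
    C(LogCover P × LogCover Q, RootCover n fun y : U × V => P y.1 * Q y.2) :=
  ⟨fun x => ⟨(Complex.exp (-(x.1.1.1 + x.2.1.1) / n), x.1.1.2, x.2.1.2), by
    change _ * (P x.1.1.2 * Q x.2.1.2) = 1
    rw [← Complex.exp_nat_mul, mul_div_cancel₀ _ (NeZero.ne (n : ℂ)), ← x.1.2, ← x.2.2,
      ← Complex.exp_add, ← Complex.exp_add, neg_add_cancel, Complex.exp_zero]⟩, by fun_prop⟩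

theorem rootOfLogs_vadd_left [NeZero n] (k : ℤ) (x : LogCover P) (y : LogCover Q) :
    rootOfLogs n P Q (k +ᵥ x, y) = rootOfLogs n P Q (x, k +ᵥ y) :=
  Subtype.ext (Prod.ext (by simp only [rootOfLogs, ContinuousMap.coe_mk, LogCover.fst_vadd,
    add_right_comm, add_assoc]) rfl)

theorem rootOfLogs_mul_vadd [NeZero n] (m : ℤ) (x : LogCover P) (y : LogCover Q) :
    rootOfLogs n P Q ((n * m : ℤ) +ᵥ x, y) = rootOfLogs n P Q (x, y) := by
  refine Subtype.ext (Prod.ext (Complex.exp_eq_exp_iff_exists_int.2 ⟨-m, ?_⟩) rfl)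
  have := NeZero.ne (n : ℂ)
  simp only [LogCover.fst_vadd]
  push_cast
  field_simp
  ring

theorem rootOfLogs_neg_vadd [NeZero n] {ζ : rootsOfUnity n ℂ} {k : ℕ}
    (hζ : Complex.exp (2 * Real.pi * Complex.I * (k / n)) = (ζ : ℂˣ)) (x : LogCover P)
    (y : LogCover Q) : rootOfLogs n P Q (-(k : ℤ) +ᵥ x, y) = ζ • rootOfLogs n P Q (x, y) := by
  refine Subtype.ext (Prod.ext ?_ rfl)
  change Complex.exp _ = ((ζ : ℂˣ) : ℂ) * Complex.exp _
  rw [← hζ, ← Complex.exp_add]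
  congr 1
  simp only [LogCover.fst_vadd]
  push_cast
  ring

theorem exists_rootOfLogs_comp_eq [NeZero n] (hQ : Continuous Q)
    (Q_ne : ∀ v, Q v ≠ 0) (γ : C(I, RootCover n fun y : U × V => P y.1 * Q y.2))
    (hγ : γ 0 = γ 1) :
    ∃ (α : C(I, LogCover P)) (β : C(I, LogCover Q)) (a b m : ℤ), a + b = n * m ∧
      (rootOfLogs n P Q).comp (α.prodMk β) = γ ∧ α 1 = a +ᵥ α 0 ∧ β 1 = b +ᵥ β 0 := by
  obtain ⟨ℓ, hℓ, exp_ℓ⟩ := exists_continuous_log_on_interval (g := fun t => (γ t).1.1)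
    (by fun_prop) fun t => RootCover.fst_ne_zero _
  obtain ⟨M, hM, exp_M⟩ := exists_continuous_log_on_interval (g := fun t => Q (γ t).1.2.2)
    (by fun_prop) fun t => Q_ne _
  have exp_L (t) : Complex.exp (-n * ℓ t - M t) = P (γ t).1.2.1 := by
    have root : (γ t).1.1 ^ n * (P (γ t).1.2.1 * Q (γ t).1.2.2) = 1 := (γ t).2
    rw [Complex.exp_sub, neg_mul, Complex.exp_neg, Complex.exp_nat_mul, exp_ℓ, exp_M,
      div_eq_iff (Q_ne _), inv_eq_iff_eq_inv, eq_inv_of_mul_eq_one_left root]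
  obtain ⟨m, hm⟩ : ∃ m : ℤ, ℓ 1 = ℓ 0 + m * (2 * Real.pi * Complex.I) :=
    Complex.exp_eq_exp_iff_exists_int.1 (by rw [exp_ℓ, exp_ℓ, hγ])
  obtain ⟨b, hb⟩ : ∃ b : ℤ, M 1 = M 0 + b * (2 * Real.pi * Complex.I) :=
    Complex.exp_eq_exp_iff_exists_int.1 (by rw [exp_M, exp_M, hγ])
  refine ⟨⟨fun t => ⟨(-n * ℓ t - M t, (γ t).1.2.1), exp_L t⟩,
    (show Continuous fun t => (-n * ℓ t - M t, (γ t).1.2.1) by fun_prop).subtype_mk exp_L⟩,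
    ⟨fun t => ⟨(M t, (γ t).1.2.2), exp_M t⟩,
    (show Continuous fun t => (M t, (γ t).1.2.2) by fun_prop).subtype_mk exp_M⟩,
    -n * m - b, b, -m, by ring, ?_, ?_, ?_⟩
  · refine ContinuousMap.ext fun t => Subtype.ext (Prod.ext ?_ rfl)
    change Complex.exp (-(-n * ℓ t - M t + M t) / n) = _
    rw [sub_add_cancel, neg_mul, neg_neg, mul_div_cancel_left₀ _ (NeZero.ne (n : ℂ)), exp_ℓ]
  · refine Subtype.ext (Prod.ext ?_ (congrArg (fun x => x.1.2.1) hγ.symm))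
    change -n * ℓ 1 - M 1 = -n * ℓ 0 - M 0 + ((-n * m - b : ℤ) : ℂ) * _
    rw [hm, hb]
    push_cast
    ring
  · exact Subtype.ext (Prod.ext hb (congrArg (fun x => x.1.2.2) hγ.symm))

theorem IsPathCocycle.smul_eq_of_loop [NeZero n]
    {φ : C(I, RootCover n fun y : U × V => P y.1 * Q y.2) → A} (hφ : IsPathCocycle φ)
    (hQ : Continuous Q) (Q_ne : ∀ v, Q v ≠ 0)
    (joined_P : ∀ x : LogCover P, Joined x ((1 : ℤ) +ᵥ x))
    (joined_Q : ∀ x : LogCover Q, Joined x ((1 : ℤ) +ᵥ x))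
    (ζ : rootsOfUnity n ℂ) {γ : C(I, RootCover n fun y : U × V => P y.1 * Q y.2)}
    (hγ : γ 0 = γ 1) : φ (ζ • γ) = φ γ := by
  obtain ⟨α, β, a, b, m, hab, rfl, hα, hβ⟩ := exists_rootOfLogs_comp_eq hQ Q_ne γ hγ
  obtain ⟨k, -, hk⟩ := (Complex.mem_rootsOfUnity n ζ).1 ζ.2
  have rotate := (hφ.comp (rootOfLogs n P Q)).vadd_prodMk_eq
    (fun k α β => congrArg φ (ContinuousMap.ext fun t => rootOfLogs_vadd_left k (α t) (β t)))
    joined_P joined_Q (fun α β => ?_) hα hβ (-(k : ℤ))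
  · rw [← rotate]
    exact congrArg φ (ContinuousMap.ext fun t => (rootOfLogs_neg_vadd hk (α t) (β t)).symm)
  · rw [hab]
    exact congrArg φ (ContinuousMap.ext fun t => rootOfLogs_mul_vadd m (α t) (β t))

theorem IsPathCocycle.exists_eq_add_of_rootCover [NeZero n] [PathConnectedSpace U]
    [PathConnectedSpace V]
    {φ : C(I, RootCover n fun y : U × V => P y.1 * Q y.2) → ℂ} (hφ : IsPathCocycle φ)
    (hP : Continuous P) (P_ne : ∀ u, P u ≠ 0) (hQ : Continuous Q) (Q_ne : ∀ v, Q v ≠ 0)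
    (joined_P : ∀ x : LogCover P, Joined x ((1 : ℤ) +ᵥ x))
    (joined_Q : ∀ x : LogCover Q, Joined x ((1 : ℤ) +ᵥ x)) :
    ∃ (χ : C(I, U) → ℂ) (ψ : C(I, V) → ℂ), IsPathCocycle χ ∧ IsPathCocycle ψ ∧
      ∀ γ, γ 0 = γ 1 → φ γ = χ ⟨fun t => (γ t).1.2.1, by fun_prop⟩ +
        ψ ⟨fun t => (γ t).1.2.2, by fun_prop⟩ := by
  have := Fintype.ofFinite (rootsOfUnity n ℂ)
  obtain ⟨θ, hθ, θ_proj⟩ := hφ.exists_transfer (G := rootsOfUnity n ℂ)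
    (p := RootCover.proj n fun y : U × V => P y.1 * Q y.2)
    (RootCover.exists_lift_square (by fun_prop) fun y => mul_ne_zero (P_ne _) (Q_ne _))
    RootCover.exists_smul_eq
  obtain ⟨χ, ψ, hχ, hψ, θ_eq⟩ := (hθ.smul (n : ℂ)⁻¹).exists_eq_add_of_loop
  refine ⟨χ, ψ, hχ, hψ, fun γ hγ => ?_⟩
  have average : φ γ = (n : ℂ)⁻¹ • θ ((RootCover.proj n _).comp γ) := by
    rw [θ_proj]
    simp only [hφ.smul_eq_of_loop hQ Q_ne joined_P joined_Q _ hγ]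
    rw [Finset.sum_const, Finset.card_univ, ← Nat.card_eq_fintype_card,
      Complex.card_rootsOfUnity, ← Nat.cast_smul_eq_nsmul ℂ, inv_smul_smul₀ (NeZero.ne (n : ℂ))]
  rw [average]
  exact θ_eq ⟨fun t => (γ t).1.2.1, by fun_prop⟩ ⟨fun t => (γ t).1.2.2, by fun_prop⟩
    (congrArg (fun x => x.1.2.1) hγ) (congrArg (fun x => x.1.2.2) hγ)

end LogCover

section InvPuncturedPlane

variable {ι : Type*}

theorem exists_pos_forall_norm_mul_lt_one [Finite ι] (κ : ι → ℂ) :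
    ∃ r : ℝ, 0 < r ∧ ∀ k, ‖κ k * r‖ < 1 := by
  have := Fintype.ofFinite ι
  have hr : 0 < 1 / (‖κ‖ + 1) := by positivity
  refine ⟨1 / (‖κ‖ + 1), hr, fun k => ?_⟩
  rw [norm_mul, Complex.norm_real, Real.norm_of_nonneg hr.le, mul_one_div,
    div_lt_one (by positivity)]
  linarith [norm_le_pi_norm κ k]

theorem exists_loop_of_log_increments [Finite ι] [DecidableEq ι] {lam : ι → ℂ}
    (hlam : Function.Injective lam) {i : ι} (hi : lam i ≠ 0) (N : ℤ) :
    ∃ (u : I → ℂ) (L : ι → I → ℂ), Continuous u ∧ (∀ k, Continuous (L k)) ∧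
      (∀ k t, Complex.exp (L k t) = 1 - lam k * u t) ∧ u 0 = u 1 ∧
      ∀ k, L k 1 = L k 0 + if k = i then N * (2 * Real.pi * Complex.I) else 0 := by
  let c (k : ι) : ℂ := 1 - lam k / lam i
  have c_ne {k : ι} (hk : k ≠ i) : c k ≠ 0 := fun h =>
    hk (hlam ((div_eq_one_iff_eq hi).1 (sub_eq_zero.1 h).symm))
  obtain ⟨r, hr, hκ⟩ := exists_pos_forall_norm_mul_lt_one fun k => lam k / lam i / c k
  let e (t : I) : ℂ := Complex.exp ((2 * Real.pi * N * t : ℝ) * Complex.I)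
  have e_zero : e 0 = 1 := by simp [e]
  have e_one : e 1 = 1 := by
    rw [← Complex.exp_int_mul_two_pi_mul_I N]
    exact congrArg Complex.exp (by push_cast [Set.Icc.coe_one]; ring)
  have mem_slitPlane (k t) : 1 + lam k / lam i / c k * r * e t ∈ Complex.slitPlane := by
    refine Complex.mem_slitPlane_of_norm_lt_one ?_
    rw [norm_mul, Complex.norm_exp_ofReal_mul_I, mul_one]
    exact hκ k
  refine ⟨fun t => (1 - r * e t) / lam i,
    fun k t => if k = i then Real.log r + (2 * Real.pi * N * t : ℝ) * Complex.I
      else Complex.log (c k) + Complex.log (1 + lam k / lam i / c k * r * e t),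
    by fun_prop, fun k => ?_, fun k t => ?_, by simp only [e_zero, e_one], fun k => ?_⟩
  · by_cases hk : k = i
    · simp only [hk, if_true]
      fun_prop
    · simp only [hk, if_false]
      exact continuous_const.add (Continuous.clog (by fun_prop) (mem_slitPlane k))
  · by_cases hk : k = i
    · simp only [hk, if_true]
      rw [Complex.exp_add, ← Complex.ofReal_exp, Real.exp_log hr, mul_div_cancel₀ _ hi,
        sub_sub_cancel]
    · simp only [hk, if_false]
      rw [Complex.exp_add, Complex.exp_log (c_ne hk),
        Complex.exp_log (Complex.slitPlane_ne_zero (mem_slitPlane k t)), mul_one_add, mul_assoc,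
        ← mul_assoc (c k), mul_div_cancel₀ _ (c_ne hk)]
      ring
  · by_cases hk : k = i
    · simp only [hk, if_true]
      push_cast [Set.Icc.coe_one, Set.Icc.coe_zero]
      ring
    · simp only [hk, if_false, e_zero, e_one, add_zero]

instance pathConnectedSpace_invPuncturedPlane [Finite ι] (lam : ι → ℂ) :
    PathConnectedSpace (InvPuncturedPlane lam) := by
  have finite_compl : {u : ℂ | ∀ i, 1 - lam i * u ≠ 0}ᶜ.Finite := by
    refine (Set.finite_range fun i => (lam i)⁻¹).subset fun u hu => ?_
    simp only [Set.mem_compl_iff, Set.mem_ofPred_eq, not_forall, not_not] at hu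
    obtain ⟨i, hi⟩ := hu
    exact ⟨i, (eq_inv_of_mul_eq_one_right (sub_eq_zero.1 hi).symm).symm⟩
  have := finite_compl.countable.isPathConnected_compl_of_one_lt_rank
    (by rw [Complex.rank_real_complex]; norm_num)
  rw [compl_compl] at this
  exact isPathConnected_iff_pathConnectedSpace.1 this

theorem LogCover.exists_joined_vadd {U : Type*} [TopologicalSpace U] [PathConnectedSpace U]
    {P : U → ℂ} (hP : Continuous P) (P_ne : ∀ u, P u ≠ 0) (x y : LogCover P) :
    ∃ k : ℤ, Joined x (k +ᵥ y) := by
  let γ := PathConnectedSpace.somePath x.1.2 y.1.2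
  obtain ⟨L, hL, exp_L⟩ := exists_continuous_log_on_interval (hP.comp γ.continuous)
    fun t => P_ne (γ t)
  have exp_lift (t : I) : Complex.exp (L t - L 0 + x.1.1) = P (γ t) := by
    rw [Complex.exp_add, Complex.exp_sub, exp_L, exp_L, x.2, Function.comp, Function.comp,
      γ.source, div_mul_cancel₀ _ (P_ne _)]
  obtain ⟨k, hk⟩ := Complex.exp_eq_exp_iff_exists_int.1
    ((exp_lift 1).trans ((congrArg P γ.target).trans y.2.symm))
  refine ⟨k, ⟨⟨⟨fun t => ⟨(L t - L 0 + x.1.1, γ t), exp_lift t⟩, by fun_prop⟩, ?_, ?_⟩⟩⟩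
  · simp
  · exact Subtype.ext (Prod.ext hk γ.target)

theorem joined_one_vadd_logCover [Fintype ι] {lam : ι → ℂ} (hlam : Function.Injective lam)
    (hne : ∃ i, lam i ≠ 0)
    (x : LogCover fun u : InvPuncturedPlane lam => ∏ i, (1 - lam i * (u : ℂ))) :
    Joined x ((1 : ℤ) +ᵥ x) := by
  classical
  obtain ⟨i, hi⟩ := hne
  obtain ⟨u, L, hu, hL, exp_L, u_zero, L_one⟩ := exists_loop_of_log_increments hlam hi 1
  have form_ne (t k) : 1 - lam k * u t ≠ 0 := exp_L k t ▸ Complex.exp_ne_zero _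
  let lift : C(I, LogCover fun u : InvPuncturedPlane lam => ∏ i, (1 - lam i * (u : ℂ))) :=
    ⟨fun t => ⟨(∑ k, L k t, ⟨u t, form_ne t⟩), by simp only [Complex.exp_sum, exp_L]⟩, by fun_prop⟩
  have lift_one : lift 1 = (1 : ℤ) +ᵥ lift 0 := by
    refine Subtype.ext (Prod.ext ?_ (Subtype.ext u_zero.symm))
    change ∑ k, L k 1 = ∑ k, L k 0 + ((1 : ℤ) : ℂ) * (2 * Real.pi * Complex.I)
    simp only [L_one, Finset.sum_add_distrib, Finset.sum_ite_eq', Finset.mem_univ, if_true]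
  obtain ⟨k, hk⟩ := LogCover.exists_joined_vadd (by fun_prop)
    (fun u => Finset.prod_ne_zero_iff.2 fun i _ => u.2 i) x (lift 0)
  have circle : Joined (lift 0) ((1 : ℤ) +ᵥ lift 0) := lift_one ▸ ⟨⟨lift, rfl, rfl⟩⟩
  have around := circle.map (continuous_const_vadd k)
  rw [vadd_comm] at around
  exact (hk.trans around).trans (hk.map (continuous_const_vadd (1 : ℤ))).symm

end InvPuncturedPlane

/-! ### Milnor fibre, away from `x₀ = 0` -/

section LinearForm

variable {p q : ℕ} {lam : Fin p → ℂ} {mu : Fin q → ℂ}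

/-- The linear factors of `f`, those through `P₁` indexed by `Fin p` and those through `P₂` by
`Fin q`. -/
def linearForm (lam : Fin p → ℂ) (mu : Fin q → ℂ) (k : Fin p ⊕ Fin q) (x : Fin 3 → ℂ) : ℂ :=
  Sum.elim (fun i => x 0 - lam i * x 1) (fun j => x 0 - mu j * x 2) k

@[fun_prop]
theorem continuous_linearForm (k : Fin p ⊕ Fin q) : Continuous (linearForm lam mu k) := by
  cases k with
  | inl i => exact (show Continuous fun x : Fin 3 → ℂ => x 0 - lam i * x 1 by fun_prop)
  | inr j => exact (show Continuous fun x : Fin 3 → ℂ => x 0 - mu j * x 2 by fun_prop)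

theorem linearForm_smul (k : Fin p ⊕ Fin q) (a : ℂ) (x : Fin 3 → ℂ) :
    linearForm lam mu k (a • x) = a * linearForm lam mu k x := by
  cases k <;>
    simp only [linearForm, Sum.elim_inl, Sum.elim_inr, Pi.smul_apply, smul_eq_mul] <;> ring

theorem prod_linearForm (x : Fin 3 → ℂ) :
    ∏ k, linearForm lam mu k x = (∏ i, (x 0 - lam i * x 1)) * ∏ j, (x 0 - mu j * x 2) :=
  Fintype.prod_sum_type _

theorem linearForm_ne_zero (x : MilnorFibre p q lam mu) (k : Fin p ⊕ Fin q) :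
    linearForm lam mu k x.1 ≠ 0 :=
  Finset.prod_ne_zero_iff.1 (((prod_linearForm x.1).trans x.2).trans_ne one_ne_zero) k
    (Finset.mem_univ k)

theorem prod_linearForm_smul (a : ℂ) (x : Fin 3 → ℂ) :
    ∏ k, linearForm lam mu k (a • x) = a ^ (p + q) * ∏ k, linearForm lam mu k x := by
  simp only [linearForm_smul, Finset.prod_mul_distrib, Finset.prod_const, Finset.card_univ,
    Fintype.card_sum, Fintype.card_fin]

theorem prod_linearForm_smul_cons_one (a u v : ℂ) :
    ∏ k, linearForm lam mu k (a • ![1, u, v]) =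
      a ^ (p + q) * ((∏ i, (1 - lam i * u)) * ∏ j, (1 - mu j * v)) := by
  rw [prod_linearForm_smul, prod_linearForm]
  rfl

/-- The increment of a logarithm of the linear form `k` along a path in the Milnor fibre. -/
noncomputable def linearFormIncrement (k : Fin p ⊕ Fin q) (γ : C(I, MilnorFibre p q lam mu)) : ℂ :=
  logIncrement fun t => linearForm lam mu k (γ t).1

theorem isPathCocycle_linearFormIncrement (k : Fin p ⊕ Fin q) :
    IsPathCocycle (linearFormIncrement (lam := lam) (mu := mu) k) :=
  isPathCocycle_logIncrement (by fun_prop) fun x => linearForm_ne_zero x k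

theorem isPathCocycle_sum_linearFormIncrement (c : Fin p ⊕ Fin q → ℂ) :
    IsPathCocycle fun γ : C(I, MilnorFibre p q lam mu) => ∑ k, c k * linearFormIncrement k γ := by
  convert IsPathCocycle.sum Finset.univ fun k _ => (isPathCocycle_linearFormIncrement k).smul (c k)
    using 1
  ext γ
  simp only [Finset.sum_apply, Pi.smul_apply, smul_eq_mul]

/-- The chart of the part `x₀ ≠ 0` of the Milnor fibre with coordinates `x₀`, `u = x₁ / x₀` and
`v = x₂ / x₀`. -/
def affineChart (lam : Fin p → ℂ) (mu : Fin q → ℂ) :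
    C(RootCover (p + q) fun y : InvPuncturedPlane lam × InvPuncturedPlane mu =>
      (∏ i, (1 - lam i * (y.1 : ℂ))) * ∏ j, (1 - mu j * (y.2 : ℂ)), MilnorFibre p q lam mu) :=
  ⟨fun x => ⟨x.1.1 • ![1, (x.1.2.1 : ℂ), (x.1.2.2 : ℂ)],
    ((prod_linearForm _).symm.trans (prod_linearForm_smul_cons_one ..)).trans x.2⟩, by fun_prop⟩

theorem exists_loop_affineChart_comp_eq {γ : C(I, MilnorFibre p q lam mu)} (hγ : γ 0 = γ 1)
    (γ_ne : ∀ t, (γ t).1 0 ≠ 0) : ∃ γ', γ' 0 = γ' 1 ∧ (affineChart lam mu).comp γ' = γ := by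
  have smul_eq (t) : (γ t).1 0 • ![1, (γ t).1 1 / (γ t).1 0, (γ t).1 2 / (γ t).1 0] = (γ t).1 := by
    ext k
    fin_cases k <;> simp [mul_div_cancel₀ _ (γ_ne t)]
  have form_ne (t k) : linearForm lam mu k ![1, (γ t).1 1 / (γ t).1 0, (γ t).1 2 / (γ t).1 0] ≠ 0 :=
    right_ne_zero_of_mul (by rw [← linearForm_smul, smul_eq]; exact linearForm_ne_zero (γ t) k)
  have root (t) := (prod_linearForm_smul_cons_one ..).symm.trans
    ((congrArg (∏ k, linearForm lam mu k ·) (smul_eq t)).trans ((prod_linearForm _).trans (γ t).2))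
  refine ⟨⟨fun t => ⟨((γ t).1 0, ⟨(γ t).1 1 / (γ t).1 0, fun i => form_ne t (.inl i)⟩,
    ⟨(γ t).1 2 / (γ t).1 0, fun j => form_ne t (.inr j)⟩), root t⟩, ?_⟩, ?_, ?_⟩
  · have := fun k => (continuous_apply k).comp (continuous_subtype_val.comp γ.continuous)
    refine Continuous.subtype_mk (.prodMk (this 0) (.prodMk ?_ ?_)) _
    · exact ((this 1).div (this 0) γ_ne).subtype_mk _
    · exact ((this 2).div (this 0) γ_ne).subtype_mk _
  · simp only [ContinuousMap.coe_mk, hγ]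
  · exact ContinuousMap.ext fun t => Subtype.ext (smul_eq t)

theorem IsPathCocycle.exists_eq_sum_logIncrement_of_zero_ne
    (hlam : Function.Injective lam) (hmu : Function.Injective mu)
    (hl : ∃ i, lam i ≠ 0) (hm : ∃ j, mu j ≠ 0)
    {φ : C(I, MilnorFibre p q lam mu) → ℂ} (hφ : IsPathCocycle φ) :
    ∃ (c : Fin p ⊕ Fin q → ℂ) (d : ℂ), ∀ γ, γ 0 = γ 1 → (∀ t, (γ t).1 0 ≠ 0) →
      φ γ = ∑ k, c k * linearFormIncrement k γ +
        d * logIncrement (fun t => (γ t).1 0) := by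
  have : NeZero (p + q) := ⟨by have := hl.choose.2; omega⟩
  obtain ⟨χ, ψ, hχ, hψ, φ_eq⟩ := (hφ.comp (affineChart lam mu)).exists_eq_add_of_rootCover
    (P := fun u : InvPuncturedPlane lam => ∏ i, (1 - lam i * (u : ℂ)))
    (Q := fun v : InvPuncturedPlane mu => ∏ j, (1 - mu j * (v : ℂ)))
    (by fun_prop) (fun u => Finset.prod_ne_zero_iff.2 fun i _ => u.2 i)
    (by fun_prop) (fun v => Finset.prod_ne_zero_iff.2 fun j _ => v.2 j)
    (joined_one_vadd_logCover hlam hl) (joined_one_vadd_logCover hmu hm)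
  obtain ⟨a, ha⟩ := hχ.exists_eq_sum_logIncrement hlam
  obtain ⟨b, hb⟩ := hψ.exists_eq_sum_logIncrement hmu
  refine ⟨Sum.elim a b, -∑ k, Sum.elim a b k, fun γ hγ γ_ne => ?_⟩
  obtain ⟨γ', hγ', rfl⟩ := exists_loop_affineChart_comp_eq hγ γ_ne
  have linearFormIncrement_eq (k) : linearFormIncrement k ((affineChart lam mu).comp γ') =
      logIncrement (fun t => (γ' t).1.1) +
        logIncrement fun t => linearForm lam mu k ![1, (γ' t).1.2.1.1, (γ' t).1.2.2.1] := by
    have factor (t) : linearForm lam mu k (affineChart lam mu (γ' t)).1 = _ := linearForm_smul ..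
    have ne_zero (t) := factor t ▸ linearForm_ne_zero (affineChart lam mu (γ' t)) k
    rw [← logIncrement_mul (by fun_prop) (by fun_prop) (fun t => left_ne_zero_of_mul (ne_zero t))
      fun t => right_ne_zero_of_mul (ne_zero t)]
    exact congrArg logIncrement (funext factor)
  have zero_eq (t) : (affineChart lam mu (γ' t)).1 0 = (γ' t).1.1 := mul_one _
  have φ_eq_sum := φ_eq γ' hγ'
  rw [ha _ (congrArg (fun x => x.1.2.1) hγ'), hb _ (congrArg (fun x => x.1.2.2) hγ')] at φ_eq_sum
  simp only [ContinuousMap.comp_apply, linearFormIncrement_eq, zero_eq, mul_add,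
    Finset.sum_add_distrib, ← Finset.sum_mul, neg_mul, add_neg_cancel_comm, Fintype.sum_sum_type]
  exact φ_eq_sum

end LinearForm

/-! ### Extension across `x₀ = 0` -/

section DiscNeighbourhood

variable {X A : Type*} [TopologicalSpace X] [AddCommGroup A]

theorem IsPathCocycle.exists_primitive_of_convex {E : Type*} [AddCommGroup E] [Module ℝ E]
    [TopologicalSpace E] [IsTopologicalAddGroup E] [ContinuousSMul ℝ E] {s : Set E}
    (hs : Convex ℝ s) {φ : C(I, s) → A} (hφ : IsPathCocycle φ) :
    ∃ f : s → A, ∀ γ : C(I, s), φ γ = f (γ 1) - f (γ 0) :=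
  hφ.exists_primitive fun γ hγ =>
    (hφ.eq_of_lineMap_mem (p := (· ∈ s)) (γ' := .const I (γ 0)) hγ rfl fun t r =>
      hs.lineMap_mem (γ t).2 (γ 0).2 r.2).trans (hφ.const _)

theorem exists_path_ne_zero_in_unit_ball {a b : Metric.ball (0 : ℂ) 1} (ha : (a : ℂ) ≠ 0)
    (hb : (b : ℂ) ≠ 0) :
    ∃ γ : C(I, Metric.ball (0 : ℂ) 1), γ 0 = a ∧ γ 1 = b ∧ ∀ t, (γ t : ℂ) ≠ 0 := by
  have log_re_neg {z : Metric.ball (0 : ℂ) 1} (hz : (z : ℂ) ≠ 0) : (Complex.log z).re < 0 := by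
    rw [Complex.log_re]
    exact Real.log_neg (norm_pos_iff.2 hz) (mem_ball_zero_iff.1 z.2)
  have exp_mem (t : I) : Complex.exp (AffineMap.lineMap (Complex.log a) (Complex.log b) (t : ℝ)) ∈
      Metric.ball (0 : ℂ) 1 := by
    rw [mem_ball_zero_iff, Complex.norm_exp, Real.exp_lt_one_iff]
    exact (convex_halfSpace_re_lt 0).lineMap_mem (log_re_neg ha) (log_re_neg hb) t.2
  refine ⟨⟨fun t => ⟨_, exp_mem t⟩, .subtype_mk ?_ _⟩, ?_, ?_, fun t => Complex.exp_ne_zero _⟩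
  · simp only [AffineMap.lineMap_apply_module']
    fun_prop
  · simp [Complex.exp_log ha]
  · simp [Complex.exp_log hb]

/-- A family of open unit discs `K (x, ·)` in `X`, indexed by the points `x` of `V`, such that the
disc of `x` passes through `x` and meets the complement of `U` in its centre only. -/
structure DiscFamily (U V : Set X) where
  /-- The family of discs. -/
  K : C(V × Metric.ball (0 : ℂ) 1, X)
  /-- The position of `x` in its own disc. -/
  c : C(V, Metric.ball (0 : ℂ) 1)
  K_c (x : V) : K (x, c x) = x
  K_mem_iff (z) : K z ∈ U ↔ (z.2 : ℂ) ≠ 0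

namespace DiscFamily

variable {U V : Set X} (D : DiscFamily U V)

/-- The disc of the family around the point `x`. -/
noncomputable def disc (x : V) : C(Metric.ball (0 : ℂ) 1, X) :=
  D.K.comp (.prodMk (.const _ x) (.id _))

theorem disc_mem_iff (x : V) (z : Metric.ball (0 : ℂ) 1) : D.disc x z ∈ U ↔ (z : ℂ) ≠ 0 :=
  D.K_mem_iff (x, z)

/-- A base point common to all the discs. -/
noncomputable def half : Metric.ball (0 : ℂ) 1 :=
  ⟨1 / 2, by rw [mem_ball_zero_iff, norm_div]; norm_num⟩

theorem half_ne_zero : (half : ℂ) ≠ 0 :=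
  one_div_ne_zero two_ne_zero

/-- The segment from the base point to the position of `x` in its own disc. -/
noncomputable def ray : C(V × I, Metric.ball (0 : ℂ) 1) :=
  ⟨fun z => ⟨AffineMap.lineMap half.1 (D.c z.1).1 (z.2 : ℝ),
    (convex_ball 0 1).lineMap_mem half.2 (D.c z.1).2 z.2.2⟩, .subtype_mk
    (by simp only [AffineMap.lineMap_apply_module']; fun_prop) _⟩

theorem ray_zero (x : V) : D.ray (x, 0) = half := by
  simp [ray]

theorem ray_one (x : V) : D.ray (x, 1) = D.c x := by
  simp [ray]

/-- The image in `X` of the segment from the base point to the position of `x` in its own disc. -/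
noncomputable def spoke (x : V) : C(I, X) :=
  (D.disc x).comp (D.ray.comp (.prodMk (.const _ x) (.id _)))

variable {φ : C(I, X) → A}

theorem exists_primitive_disc (hφ : IsPathCocycle φ) (x : V) :
    ∃ F : Metric.ball (0 : ℂ) 1 → A,
      ∀ γ : C(I, Metric.ball (0 : ℂ) 1), φ ((D.disc x).comp γ) = F (γ 1) - F (γ 0) :=
  (hφ.comp (D.disc x)).exists_primitive_of_convex (convex_ball 0 1)

theorem apply_spoke_of_mem (hφ : IsPathCocycle φ) {f : X → A}
    (hf : ∀ γ : C(I, X), (∀ t, γ t ∈ U) → φ γ = f (γ 1) - f (γ 0)) (x : V) (hx : (x : X) ∈ U) :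
    φ (D.spoke x) = f x - f (D.disc x half) := by
  obtain ⟨F, hF⟩ := D.exists_primitive_disc hφ x
  have disc_c : D.disc x (D.c x) = x := D.K_c x
  have c_ne : (D.c x : ℂ) ≠ 0 := (D.disc_mem_iff x _).1 (disc_c.symm ▸ hx)
  obtain ⟨γ, γ_zero, γ_one, γ_ne⟩ := exists_path_ne_zero_in_unit_ball half_ne_zero c_ne
  calc
    φ (D.spoke x) = F (D.ray (x, 1)) - F (D.ray (x, 0)) := hF _
    _ = F (γ 1) - F (γ 0) := by rw [ray_one, ray_zero, γ_one, γ_zero]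
    _ = f (D.disc x (γ 1)) - f (D.disc x (γ 0)) :=
      (hF γ).symm.trans (hf _ fun t => (D.disc_mem_iff x _).2 (γ_ne t))
    _ = f x - f (D.disc x half) := by rw [γ_one, γ_zero, disc_c]

theorem apply_eq_of_mem (hφ : IsPathCocycle φ) {f : X → A}
    (hf : ∀ γ : C(I, X), (∀ t, γ t ∈ U) → φ γ = f (γ 1) - f (γ 0)) (γ : C(I, V)) :
    φ ((⟨Subtype.val, by fun_prop⟩ : C(V, X)).comp γ) =
      (f (D.disc (γ 1) half) + φ (D.spoke (γ 1))) -
        (f (D.disc (γ 0) half) + φ (D.spoke (γ 0))) := by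
  have square := hφ.add_eq_add_of_square
    (s := fun z => D.K (γ z.1, D.ray (γ z.1, z.2))) (by fun_prop)
    (bottom := D.K.comp (γ.prodMk (.const I half))) (right := D.spoke (γ 1))
    (left := D.spoke (γ 0)) (top := (⟨Subtype.val, by fun_prop⟩ : C(V, X)).comp γ)
    (fun t => by rw [ray_zero]; rfl) (fun t => rfl) (fun t => rfl)
    (fun t => by rw [ray_one, D.K_c]; rfl)
  rw [hf _ fun t => (D.disc_mem_iff _ _).2 half_ne_zero] at square
  calc
    φ _ = _ := eq_sub_of_add_eq' square.symm
    _ = _ := by rw [sub_add_eq_add_sub, sub_sub]; rfl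

theorem coeff_eq_zero {φ : C(I, X) → ℂ} (hφ : IsPathCocycle φ) {h : X → ℂ} (x : V)
    {e : Metric.ball (0 : ℂ) 1 → ℂ} (he : Continuous e)
    (h_K : ∀ z, h (D.disc x z) = Complex.exp (e z) * z) {d : ℂ}
    (hd : ∀ γ : C(I, X), (∀ t, γ t ∈ U) → γ 0 = γ 1 → φ γ = d * logIncrement fun t => h (γ t)) :
    d = 0 := by
  obtain ⟨F, hF⟩ := D.exists_primitive_disc hφ x
  let L (t : I) : ℂ := 2 * Real.pi * Complex.I * (t : ℝ) + Complex.log (1 / 2)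
  have exp_L (t) : Complex.exp (L t) = Complex.exp (2 * Real.pi * (t : ℝ) * Complex.I) / 2 := by
    rw [Complex.exp_add, Complex.exp_log (by simp), mul_one_div, mul_right_comm]
  let circle : C(I, Metric.ball (0 : ℂ) 1) :=
    ⟨fun t => ⟨Complex.exp (L t), by
      rw [exp_L, mem_ball_zero_iff, norm_div, ← Complex.ofReal_ofNat, ← Complex.ofReal_mul,
        ← Complex.ofReal_mul, Complex.norm_exp_ofReal_mul_I, Complex.norm_real]
      norm_num⟩, by fun_prop⟩
  have circle_loop : circle 0 = circle 1 := by
    ext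
    simp [circle, exp_L, Complex.exp_two_pi_mul_I]
  have increment : logIncrement (fun t => h (D.disc x (circle t))) = 2 * Real.pi * Complex.I := by
    rw [logIncrement_eq_sub (L := fun t => e (circle t) + L t) (by fun_prop) fun t =>
      (Complex.exp_add ..).trans (h_K (circle t)).symm, circle_loop]
    simp [L]
  have zero := (hd ((D.disc x).comp circle) (fun t => (D.disc_mem_iff x _).2
    (Complex.exp_ne_zero _)) (congrArg (D.disc x) circle_loop)).symm.trans (hF circle)
  rw [circle_loop, sub_self] at zero
  exact (mul_eq_zero.1 zero).resolve_right (increment.trans_ne Complex.two_pi_I_ne_zero)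

end DiscFamily

theorem IsPathCocycle.eq_zero_of_discFamily {φ : C(I, X) → A} (hφ : IsPathCocycle φ) {U V : Set X}
    (D : DiscFamily U V) (hU : IsOpen U) (hV : IsOpen V) (hUV : ∀ x, x ∈ U ∨ x ∈ V)
    (hφU : ∀ γ : C(I, X), (∀ t, γ t ∈ U) → γ 0 = γ 1 → φ γ = 0) {γ : C(I, X)} (hγ : γ 0 = γ 1) :
    φ γ = 0 := by
  classical
  obtain ⟨f, hf⟩ := hφ.exists_primitive_on U hφU
  let g (x : X) : A :=
    if hx : x ∈ V then f (D.disc ⟨x, hx⟩ DiscFamily.half) + φ (D.spoke ⟨x, hx⟩) else 0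
  refine hφ.eq_zero_of_isOpen_union hU hV hUV hf (g := g) (κ := 0) (fun γ hγ => ?_)
    (fun x hxU hxV => ?_) hγ
  · simp only [g, hγ, dif_pos]
    exact D.apply_eq_of_mem hφ hf ⟨fun t => ⟨γ t, hγ t⟩, by fun_prop⟩
  · simp only [g, hxV, dif_pos]
    rw [D.apply_spoke_of_mem hφ hf ⟨x, hxV⟩ hxU, add_zero, add_sub_cancel]

end DiscNeighbourhood

section Tube

theorem div_mem_slitPlane_of_re_pos {z w : ℂ} (hz : 0 < z.re) (hw : 0 < w.re) :
    z / w ∈ Complex.slitPlane := by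
  rw [Complex.mem_slitPlane_iff_not_le_zero]
  intro hle
  obtain ⟨re_le, im_eq⟩ := Complex.le_def.1 hle
  have w_ne : w ≠ 0 := fun h => hw.ne' (congrArg Complex.re h)
  have z_re := congrArg Complex.re (div_mul_cancel₀ z w_ne)
  rw [Complex.mul_re, im_eq, Complex.zero_im, zero_mul, sub_zero] at z_re
  exact (z_re ▸ mul_nonpos_of_nonpos_of_nonneg re_le hw.le).not_gt hz

theorem add_div_add_mem_slitPlane {a b l : ℂ} (ha : ‖a‖ < ‖l‖) (hb : ‖b‖ < ‖l‖) :
    (a + l) / (b + l) ∈ Complex.slitPlane := by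
  have l_ne : l ≠ 0 := norm_pos_iff.1 ((norm_nonneg a).trans_lt ha)
  have re_pos {c : ℂ} (hc : ‖c‖ < ‖l‖) : 0 < (c / l + 1).re := by
    have : ‖c / l‖ < 1 := by rwa [norm_div, div_lt_one (norm_pos_iff.2 l_ne)]
    rw [Complex.add_re, Complex.one_re]
    linarith [neg_le_of_abs_le (Complex.abs_re_le_norm (c / l))]
  convert div_mem_slitPlane_of_re_pos (re_pos ha) (re_pos hb) using 1
  rw [div_add_one l_ne, div_add_one l_ne, div_div_div_cancel_right₀ l_ne]

variable {p q : ℕ} {lam : Fin p → ℂ} {mu : Fin q → ℂ}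

theorem linearForm_update_zero (k : Fin p ⊕ Fin q) (x : Fin 3 → ℂ) (w : ℂ) :
    linearForm lam mu k (Function.update x 0 w) =
      w + linearForm lam mu k (Function.update x 0 0) := by
  cases k <;> simp [linearForm, sub_eq_add_neg]

/-- The exponent of the factor by which `x` has to be rescaled to stay in the Milnor fibre when its
coordinate `x₀` is changed to `w`. -/
noncomputable def tubeExponent (lam : Fin p → ℂ) (mu : Fin q → ℂ) (x : Fin 3 → ℂ) (w : ℂ) : ℂ :=
  (∑ k, Complex.log (linearForm lam mu k x / linearForm lam mu k (Function.update x 0 w))) /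
    (p + q : ℕ)

theorem tubeExponent_self (x : MilnorFibre p q lam mu) :
    tubeExponent lam mu x.1 (x.1 0) = 0 := by
  simp [tubeExponent, div_self (linearForm_ne_zero x _)]

variable [Nonempty (Fin p ⊕ Fin q)]

/-- The distance from `0` to the nearest value of `x₀` for which, `x₁` and `x₂` being fixed, one of
the linear forms vanishes. -/
noncomputable def tubeRadius (lam : Fin p → ℂ) (mu : Fin q → ℂ) (x : Fin 3 → ℂ) : ℝ :=
  Finset.univ.inf' Finset.univ_nonempty fun k => ‖linearForm lam mu k (Function.update x 0 0)‖

@[fun_prop]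
theorem continuous_tubeRadius : Continuous (tubeRadius lam mu) :=
  Continuous.finset_inf'_apply _ fun k _ => by fun_prop

theorem lt_tubeRadius_iff {x : Fin 3 → ℂ} {r : ℝ} :
    r < tubeRadius lam mu x ↔ ∀ k, r < ‖linearForm lam mu k (Function.update x 0 0)‖ := by
  simp [tubeRadius]

/-- A neighbourhood of the part `x₀ = 0` of the Milnor fibre. -/
def tube (lam : Fin p → ℂ) (mu : Fin q → ℂ) : Set (MilnorFibre p q lam mu) :=
  {x | ‖x.1 0‖ < tubeRadius lam mu x.1}

theorem isOpen_tube : IsOpen (tube lam mu) :=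
  isOpen_lt ((continuous_apply 0).comp continuous_subtype_val).norm (by fun_prop)

theorem mem_tube_of_eq_zero {x : MilnorFibre p q lam mu} (hx : x.1 0 = 0) : x ∈ tube lam mu :=
  lt_tubeRadius_iff.2 fun k => by
    rw [hx, norm_zero, norm_pos_iff]
    convert linearForm_ne_zero x k
    exact Function.update_eq_self_iff.2 hx.symm

theorem linearForm_div_update_mem_slitPlane {x : MilnorFibre p q lam mu} (hx : x ∈ tube lam mu)
    {w : ℂ} (hw : ‖w‖ < tubeRadius lam mu x.1) (k : Fin p ⊕ Fin q) :
    linearForm lam mu k x.1 / linearForm lam mu k (Function.update x.1 0 w) ∈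
      Complex.slitPlane := by
  have := add_div_add_mem_slitPlane (lt_tubeRadius_iff.1 hx k) (lt_tubeRadius_iff.1 hw k)
  rwa [← linearForm_update_zero, ← linearForm_update_zero, Function.update_eq_self] at this

theorem prod_linearForm_exp_tubeExponent_smul (x : MilnorFibre p q lam mu) {w : ℂ}
    (hw : ∀ k, linearForm lam mu k (Function.update x.1 0 w) ≠ 0) :
    ∏ k, linearForm lam mu k
      (Complex.exp (tubeExponent lam mu x.1 w) • Function.update x.1 0 w) = 1 := by
  have card_ne : ((p + q : ℕ) : ℂ) ≠ 0 := by
    have := Fintype.card_ne_zero (α := Fin p ⊕ Fin q)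
    rw [Fintype.card_sum, Fintype.card_fin, Fintype.card_fin] at this
    exact_mod_cast this
  have factor_ne (k) := div_ne_zero (linearForm_ne_zero x k) (hw k)
  rw [prod_linearForm_smul, ← Complex.exp_nat_mul, tubeExponent, mul_div_cancel₀ _ card_ne,
    Complex.exp_sum, ← Finset.prod_mul_distrib]
  calc
    _ = ∏ k, linearForm lam mu k x.1 :=
      Finset.prod_congr rfl fun k _ => by
        rw [Complex.exp_log (factor_ne k), div_mul_cancel₀ _ (hw k)]
    _ = 1 := (prod_linearForm x.1).trans x.2

theorem linearForm_update_ne_zero {x : Fin 3 → ℂ} {w : ℂ} (hw : ‖w‖ < tubeRadius lam mu x)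
    (k : Fin p ⊕ Fin q) : linearForm lam mu k (Function.update x 0 w) ≠ 0 := by
  rw [linearForm_update_zero]
  intro h
  have := lt_tubeRadius_iff.1 hw k
  rw [← norm_neg, ← eq_neg_of_add_eq_zero_right h] at this
  exact this.false

theorem tubeRadius_pos {x : MilnorFibre p q lam mu} (hx : x ∈ tube lam mu) :
    0 < tubeRadius lam mu x.1 :=
  (norm_nonneg _).trans_lt hx

theorem norm_tubeRadius_mul_lt {x : MilnorFibre p q lam mu} (hx : x ∈ tube lam mu)
    (s : Metric.ball (0 : ℂ) 1) : ‖(tubeRadius lam mu x.1 * s : ℂ)‖ < tubeRadius lam mu x.1 := by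
  rw [norm_mul, Complex.norm_of_nonneg (tubeRadius_pos hx).le]
  exact mul_lt_of_lt_one_right (tubeRadius_pos hx) (mem_ball_zero_iff.1 s.2)

theorem continuous_tubeExponent_tubeRadius_mul :
    Continuous fun z : tube lam mu × Metric.ball (0 : ℂ) 1 =>
      tubeExponent lam mu z.1.1.1 (tubeRadius lam mu z.1.1.1 * z.2) := by
  have numerator (k) : Continuous fun z : tube lam mu × Metric.ball (0 : ℂ) 1 =>
      linearForm lam mu k z.1.1.1 := by fun_prop
  have denominator (k) : Continuous fun z : tube lam mu × Metric.ball (0 : ℂ) 1 =>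
      linearForm lam mu k (Function.update z.1.1.1 0 (tubeRadius lam mu z.1.1.1 * z.2)) :=
    (continuous_linearForm k).comp (.update (by fun_prop) 0 (by fun_prop))
  have denominator_ne (k) (z : tube lam mu × Metric.ball (0 : ℂ) 1) :=
    linearForm_update_ne_zero (norm_tubeRadius_mul_lt z.1.2 z.2) k
  exact .div_const (continuous_finsetSum _ fun k _ =>
    ((numerator k).div (denominator k) (denominator_ne k)).clog fun z =>
      linearForm_div_update_mem_slitPlane z.1.2 (norm_tubeRadius_mul_lt z.1.2 z.2) k) _

theorem continuous_div_tubeRadius :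
    Continuous fun x : tube lam mu => (x.1.1 0 / tubeRadius lam mu x.1.1 : ℂ) :=
  ((continuous_apply 0).comp (continuous_subtype_val.comp continuous_subtype_val)).div
    (by fun_prop) fun x => Complex.ofReal_ne_zero.2 (tubeRadius_pos x.2).ne'

theorem div_tubeRadius_mem_ball (x : tube lam mu) :
    (x.1.1 0 / tubeRadius lam mu x.1.1 : ℂ) ∈ Metric.ball 0 1 := by
  rw [mem_ball_zero_iff, norm_div, Complex.norm_of_nonneg (tubeRadius_pos x.2).le,
    div_lt_one (tubeRadius_pos x.2)]
  exact x.2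

variable (lam mu) in
/-- The discs in the tube obtained by varying `x₀` up to the tube radius and rescaling. -/
noncomputable def tubeDiscs :
    DiscFamily {x : MilnorFibre p q lam mu | x.1 0 ≠ 0} (tube lam mu) where
  K :=
    ⟨fun z => ⟨Complex.exp (tubeExponent lam mu z.1.1.1 (tubeRadius lam mu z.1.1.1 * z.2)) •
        Function.update z.1.1.1 0 (tubeRadius lam mu z.1.1.1 * z.2),
      (prod_linearForm _).symm.trans (prod_linearForm_exp_tubeExponent_smul z.1.1
        (linearForm_update_ne_zero (norm_tubeRadius_mul_lt z.1.2 z.2)))⟩,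
      .subtype_mk (.smul (Complex.continuous_exp.comp continuous_tubeExponent_tubeRadius_mul)
        (.update (by fun_prop) 0 (by fun_prop))) _⟩
  c :=
    ⟨fun x => ⟨x.1.1 0 / tubeRadius lam mu x.1.1, div_tubeRadius_mem_ball x⟩,
      continuous_div_tubeRadius.subtype_mk _⟩
  K_c x := by
    have mul_eq : (tubeRadius lam mu x.1.1 * (x.1.1 0 / tubeRadius lam mu x.1.1) : ℂ) = x.1.1 0 :=
      mul_div_cancel₀ _ (Complex.ofReal_ne_zero.2 (tubeRadius_pos x.2).ne')
    apply Subtype.ext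
    simp only [ContinuousMap.coe_mk, mul_eq]
    rw [tubeExponent_self, Complex.exp_zero, one_smul, Function.update_eq_self]
  K_mem_iff z := by
    simp [(tubeRadius_pos z.1.2).ne']

theorem tubeDiscs_disc_apply_zero (x : tube lam mu) (s : Metric.ball (0 : ℂ) 1) :
    ((tubeDiscs lam mu).disc x s).1 0 =
      Complex.exp (tubeExponent lam mu x.1.1 (tubeRadius lam mu x.1.1 * s) +
        Real.log (tubeRadius lam mu x.1.1)) * s := by
  rw [Complex.exp_add, ← Complex.ofReal_exp, Real.exp_log (tubeRadius_pos x.2), mul_assoc]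
  rfl

end Tube

section Spanning

variable {p q : ℕ} {lam : Fin p → ℂ} {mu : Fin q → ℂ}

theorem exists_milnorFibre_zero_eq_zero [NeZero (p + q)] (hlam : ∀ i, lam i ≠ 0)
    (hmu : ∀ j, mu j ≠ 0) : ∃ x : MilnorFibre p q lam mu, x.1 0 = 0 := by
  obtain ⟨a, ha⟩ := IsAlgClosed.exists_pow_nat_eq (∏ k, linearForm lam mu k ![0, 1, 1])⁻¹
    (NeZero.pos (p + q))
  have form_ne (k) : linearForm lam mu k ![0, 1, 1] ≠ 0 := by
    cases k <;> simp [linearForm, hlam, hmu]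
  refine ⟨⟨a • ![0, 1, 1], ?_⟩, mul_zero a⟩
  rw [← prod_linearForm, prod_linearForm_smul, ha,
    inv_mul_cancel₀ (Finset.prod_ne_zero_iff.2 fun k _ => form_ne k)]

variable [Nonempty (Fin p ⊕ Fin q)]

theorem IsPathCocycle.eq_zero_of_zero_ne {A : Type*} [AddCommGroup A]
    {φ : C(I, MilnorFibre p q lam mu) → A} (hφ : IsPathCocycle φ)
    (h : ∀ γ, γ 0 = γ 1 → (∀ t, (γ t).1 0 ≠ 0) → φ γ = 0) {γ : C(I, MilnorFibre p q lam mu)}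
    (hγ : γ 0 = γ 1) : φ γ = 0 :=
  hφ.eq_zero_of_discFamily (tubeDiscs lam mu)
    (isOpen_ne_fun ((continuous_apply 0).comp continuous_subtype_val) continuous_const)
    isOpen_tube (fun _ => (em _).symm.imp id mem_tube_of_eq_zero) (fun γ hU hγ => h γ hγ hU) hγ

theorem IsPathCocycle.coeff_eq_zero_of_zero_eq_zero {φ : C(I, MilnorFibre p q lam mu) → ℂ}
    (hφ : IsPathCocycle φ) {d : ℂ}
    (h : ∀ γ, γ 0 = γ 1 → (∀ t, (γ t).1 0 ≠ 0) → φ γ = d * logIncrement fun t => (γ t).1 0)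
    {x : MilnorFibre p q lam mu} (hx : x.1 0 = 0) : d = 0 :=
  (tubeDiscs lam mu).coeff_eq_zero hφ (h := fun x => x.1 0) ⟨x, mem_tube_of_eq_zero hx⟩
    ((continuous_tubeExponent_tubeRadius_mul.comp (.prodMk_right _)).add continuous_const)
    (tubeDiscs_disc_apply_zero _) fun γ hU hγ => h γ hγ hU

theorem IsPathCocycle.exists_eq_sum_linearFormIncrement
    (hlam : Function.Injective lam) (hmu : Function.Injective mu)
    (hl : ∃ i, lam i ≠ 0) (hm : ∃ j, mu j ≠ 0)
    {φ : C(I, MilnorFibre p q lam mu) → ℂ} (hφ : IsPathCocycle φ) :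
    ∃ c : Fin p ⊕ Fin q → ℂ, ∀ γ, γ 0 = γ 1 → φ γ = ∑ k, c k * linearFormIncrement k γ := by
  classical
  suffices ∃ c : Fin p ⊕ Fin q → ℂ, ∀ γ, γ 0 = γ 1 → (∀ t, (γ t).1 0 ≠ 0) →
      φ γ = ∑ k, c k * linearFormIncrement k γ by
    obtain ⟨c, hc⟩ := this
    exact ⟨c, fun γ hγ => sub_eq_zero.1 <|
      (hφ.sub (isPathCocycle_sum_linearFormIncrement c)).eq_zero_of_zero_ne
        (fun γ hγ γ_ne => sub_eq_zero.2 (hc γ hγ γ_ne)) hγ⟩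
  obtain ⟨c, d, hcd⟩ := hφ.exists_eq_sum_logIncrement_of_zero_ne hlam hmu hl hm
  by_cases h : ∃ k, ∀ x, linearForm lam mu k x = x 0
  · obtain ⟨k, hk⟩ := h
    refine ⟨c + Pi.single k d, fun γ hγ γ_ne => ?_⟩
    simp [hcd γ hγ γ_ne, add_mul, Finset.sum_add_distrib, Pi.single_apply, linearFormIncrement, hk]
  · have : NeZero (p + q) := ⟨by have := hl.choose.2; omega⟩
    push Not at h
    have coeff_ne (k) : Sum.elim lam mu k ≠ 0 := by
      obtain ⟨x, hx⟩ := h k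
      rintro hk
      cases k <;> simp_all [linearForm]
    obtain ⟨x, hx⟩ := exists_milnorFibre_zero_eq_zero (fun i => coeff_ne (.inl i))
      fun j => coeff_ne (.inr j)
    have d_eq : d = 0 := (hφ.sub (isPathCocycle_sum_linearFormIncrement c))
      |>.coeff_eq_zero_of_zero_eq_zero
        (fun γ hγ γ_ne => sub_eq_of_eq_add' (hcd γ hγ γ_ne)) hx
    exact ⟨c, fun γ hγ γ_ne => by rw [hcd γ hγ γ_ne, d_eq, zero_mul, add_zero]⟩

end Spanning

/-! ### Relations -/

section Relations

variable {p q : ℕ} {lam : Fin p → ℂ} {mu : Fin q → ℂ}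

theorem linearForm_swap (k : Fin p ⊕ Fin q) (x : Fin 3 → ℂ) :
    linearForm mu lam k.swap ![x 0, x 2, x 1] = linearForm lam mu k x := by
  cases k <;> rfl

variable (lam mu) in
/-- The exchange of the two pencils of lines. -/
def milnorFibreSwap : C(MilnorFibre q p mu lam, MilnorFibre p q lam mu) where
  toFun x := ⟨![x.1 0, x.1 2, x.1 1], (mul_comm ..).trans x.2⟩
  continuous_toFun := ((show Continuous fun x : Fin 3 → ℂ => ![x 0, x 2, x 1] by fun_prop).comp
    continuous_subtype_val).subtype_mk _

theorem linearFormIncrement_milnorFibreSwap_comp (k : Fin p ⊕ Fin q)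
    (γ : C(I, MilnorFibre q p mu lam)) :
    linearFormIncrement k ((milnorFibreSwap lam mu).comp γ) = linearFormIncrement k.swap γ :=
  congrArg logIncrement <| funext fun t => by
    rw [← linearForm_swap]
    exact congrArg (linearForm mu lam k.swap) (by ext l; fin_cases l <;> rfl)

theorem exists_loop_linearFormIncrement_inl_eq (hlam : Function.Injective lam) {i : Fin p}
    (hi : lam i ≠ 0) :
    ∃ γ : C(I, MilnorFibre p q lam mu), γ 0 = γ 1 ∧ ∀ k, linearFormIncrement k γ =
      ((if k = .inl i then (p + q : ℂ) else 0) - 1) * (2 * Real.pi * Complex.I) := by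
  have card_ne : (p + q : ℂ) ≠ 0 := by norm_cast; have := i.2; omega
  obtain ⟨u, L, hu, hL, exp_L, u_eq, L_one⟩ := exists_loop_of_log_increments hlam hi (p + q)
  let E (t : I) : ℂ := -(∑ k, L k t) / (p + q)
  have hE : Continuous E := by fun_prop
  have E_one : E 1 = E 0 - 2 * Real.pi * Complex.I := by
    simp only [E, L_one, Finset.sum_add_distrib, Finset.sum_ite_eq', Finset.mem_univ, if_true]
    push_cast
    field_simp
    ring
  have exp_pow (t) : Complex.exp (E t) ^ (p + q) * ∏ k, (1 - lam k * u t) = 1 := by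
    simp only [← exp_L, ← Complex.exp_sum, ← Complex.exp_nat_mul, ← Complex.exp_add, E]
    push_cast
    rw [mul_div_cancel₀ _ card_ne, neg_add_cancel, Complex.exp_zero]
  let γ : C(I, MilnorFibre p q lam mu) := ⟨fun t => ⟨Complex.exp (E t) • ![1, u t, 0], by
    rw [← prod_linearForm, prod_linearForm_smul_cons_one]
    simpa only [mul_zero, sub_zero, Finset.prod_const_one, mul_one] using exp_pow t⟩, by fun_prop⟩
  refine ⟨γ, Subtype.ext ?_, fun k => ?_⟩
  · simp only [γ, ContinuousMap.coe_mk, u_eq, E_one, Complex.exp_sub, Complex.exp_two_pi_mul_I,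
      div_one]
  · rw [linearFormIncrement, logIncrement_eq_sub (L := fun t => E t + Sum.elim L 0 k t)
      (by cases k <;> simp only [Sum.elim_inl, Sum.elim_inr, Pi.zero_apply] <;> fun_prop)
      fun t => ?_]
    · cases k with
      | inl k =>
        simp only [Sum.elim_inl, Sum.inl.injEq, E_one, L_one]
        push_cast
        split_ifs <;> ring
      | inr => simp [E_one]
    · rw [Complex.exp_add]
      refine .trans ?_ (linearForm_smul ..).symm
      cases k <;> simp [exp_L, linearForm]

theorem exists_loop_linearFormIncrement_eq (hlam : Function.Injective lam)
    (hmu : Function.Injective mu) {k : Fin p ⊕ Fin q} (hk : Sum.elim lam mu k ≠ 0) :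
    ∃ γ : C(I, MilnorFibre p q lam mu), γ 0 = γ 1 ∧ ∀ l, linearFormIncrement l γ =
      ((if l = k then (p + q : ℂ) else 0) - 1) * (2 * Real.pi * Complex.I) := by
  cases k with
  | inl i => exact exists_loop_linearFormIncrement_inl_eq hlam hk
  | inr j =>
    obtain ⟨γ, hγ, increment_eq⟩ :=
      exists_loop_linearFormIncrement_inl_eq (q := p) (mu := lam) hmu hk
    refine ⟨(milnorFibreSwap lam mu).comp γ, congrArg (milnorFibreSwap lam mu) hγ, fun l => ?_⟩
    rw [linearFormIncrement_milnorFibreSwap_comp, increment_eq, add_comm (p : ℂ)]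
    cases l <;> simp

theorem sum_linearFormIncrement (γ : C(I, MilnorFibre p q lam mu)) :
    ∑ k, linearFormIncrement k γ = 0 := by
  simp only [linearFormIncrement]
  rw [← logIncrement_prod _ (by fun_prop) fun k t => linearForm_ne_zero (γ t) k]
  simp only [prod_linearForm, (γ _).2, logIncrement_const]

theorem eq_of_sum_eq_of_subsingleton_ne {ι A : Type*} [Fintype ι] [AddCommGroup A] {f g : ι → A}
    (h : ∑ i, f i = ∑ i, g i) (hs : {i | f i ≠ g i}.Subsingleton) : f = g := by
  by_contra hfg
  obtain ⟨i, hi⟩ := Function.ne_iff.1 hfg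
  rw [← sub_eq_zero, ← Finset.sum_sub_distrib, Fintype.sum_eq_single i fun k hk =>
    sub_eq_zero.2 (by_contra fun hne => hk (hs hne hi))] at h
  exact hi (sub_eq_zero.1 h)

variable (lam mu) in
/-- The combination of the logarithm increments of the linear forms with given coefficients, as a
function on loops in the Milnor fibre. -/
noncomputable def incrementCombination :
    (Fin p ⊕ Fin q → ℂ) →ₗ[ℂ] ({γ : C(I, MilnorFibre p q lam mu) // γ 0 = γ 1} → ℂ) :=
  Fintype.linearCombination ℂ fun k γ => linearFormIncrement k γ.1

theorem incrementCombination_apply (c : Fin p ⊕ Fin q → ℂ)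
    (γ : {γ : C(I, MilnorFibre p q lam mu) // γ 0 = γ 1}) :
    incrementCombination lam mu c γ = ∑ k, c k * linearFormIncrement k γ.1 := by
  simp only [incrementCombination, Fintype.linearCombination_apply, Finset.sum_apply,
    Pi.smul_apply, smul_eq_mul]

theorem range_incrementCombination (hlam : Function.Injective lam) (hmu : Function.Injective mu)
    (hl : ∃ i, lam i ≠ 0) (hm : ∃ j, mu j ≠ 0) :
    LinearMap.range (incrementCombination lam mu) = loopPeriods ℂ (MilnorFibre p q lam mu) ℂ := by
  have : Nonempty (Fin p ⊕ Fin q) := ⟨.inl hl.choose⟩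
  apply le_antisymm
  · rintro _ ⟨c, rfl⟩
    exact ⟨_, isPathCocycle_sum_linearFormIncrement c,
      funext fun γ => (incrementCombination_apply c γ).symm⟩
  · rintro _ ⟨φ, hφ, rfl⟩
    obtain ⟨c, hc⟩ := hφ.exists_eq_sum_linearFormIncrement hlam hmu hl hm
    exact ⟨c, funext fun γ => (incrementCombination_apply c γ).trans (hc γ.1 γ.2).symm⟩

theorem card_mul_eq_sum_of_mem_ker_incrementCombination (hlam : Function.Injective lam)
    (hmu : Function.Injective mu) {c : Fin p ⊕ Fin q → ℂ}
    (hc : c ∈ LinearMap.ker (incrementCombination lam mu)) {k : Fin p ⊕ Fin q}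
    (hk : Sum.elim lam mu k ≠ 0) : (p + q) * c k = ∑ l, c l := by
  obtain ⟨γ, hγ, increment_eq⟩ := exists_loop_linearFormIncrement_eq hlam hmu hk
  have sum_eq_zero := congrFun (LinearMap.mem_ker.1 hc) ⟨γ, hγ⟩
  rw [incrementCombination_apply, Pi.zero_apply] at sum_eq_zero
  simp only [increment_eq, ← mul_assoc (c _), ← Finset.sum_mul, mul_sub, mul_one,
    Finset.sum_sub_distrib, mul_ite, mul_zero, Finset.sum_ite_eq', Finset.mem_univ, if_true]
    at sum_eq_zero
  rw [mul_comm]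
  exact sub_eq_zero.1 ((mul_eq_zero.1 sum_eq_zero).resolve_right Complex.two_pi_I_ne_zero)

theorem ker_incrementCombination (hlam : Function.Injective lam) (hmu : Function.Injective mu)
    (h0 : ∀ i j, lam i ≠ 0 ∨ mu j ≠ 0) :
    LinearMap.ker (incrementCombination lam mu) = Submodule.span ℂ {1} := by
  have zero_subsingleton : {k | Sum.elim lam mu k = 0}.Subsingleton := by
    rintro (i | i) hi (j | j) hj
    · exact congrArg _ (hlam (hi.trans hj.symm))
    · exact ((h0 i j).elim (· hi) (· hj)).elim
    · exact ((h0 j i).elim (· hj) (· hi)).elim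
    · exact congrArg _ (hmu (hi.trans hj.symm))
  apply le_antisymm
  · intro c hc
    have card_mul_eq : (fun k => (p + q) * c k) = fun _ => ∑ l, c l :=
      eq_of_sum_eq_of_subsingleton_ne (by simp [-Fintype.sum_sum_type, ← Finset.mul_sum]) <|
        zero_subsingleton.anti fun k hk => by_contra fun h =>
          hk (card_mul_eq_sum_of_mem_ker_incrementCombination hlam hmu hc h)
    refine Submodule.mem_span_singleton.2 ⟨(∑ l, c l) / (p + q), funext fun k => ?_⟩
    have card_ne : (p + q : ℂ) ≠ 0 := by
      norm_cast
      have card_pos := Fintype.card_pos_iff.2 ⟨k⟩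
      simp only [Fintype.card_sum, Fintype.card_fin] at card_pos
      exact card_pos.ne'
    rw [Pi.smul_apply, Pi.one_apply, smul_eq_mul, mul_one, div_eq_iff card_ne, mul_comm]
    exact (congrFun card_mul_eq k).symm
  · rw [Submodule.span_singleton_le_iff_mem, LinearMap.mem_ker]
    ext γ
    simp only [incrementCombination_apply, Pi.one_apply, one_mul, sum_linearFormIncrement,
      Pi.zero_apply]

end Relations

theorem exists_ne_zero_of_injective {α M : Type*} [Nontrivial α] [Zero M] {f : α → M}
    (hf : Function.Injective f) : ∃ a, f a ≠ 0 := by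
  obtain ⟨a, b, hab⟩ := exists_pair_ne α
  by_contra! h
  exact hab (hf ((h a).trans (h b).symm))

theorem statement1_general {p q : ℕ} {lam : Fin p → ℂ} {mu : Fin q → ℂ}
    (hlam : Function.Injective lam) (hmu : Function.Injective mu)
    (hl : ∃ i, lam i ≠ 0) (hm : ∃ j, mu j ≠ 0) (h0 : ∀ i j, lam i ≠ 0 ∨ mu j ≠ 0) :
    Module.finrank ℂ (H1.obj (TopCat.of (MilnorFibre p q lam mu))) = p + q - 1 := by
  have : Nonempty (Fin p ⊕ Fin q) := ⟨.inl hl.choose⟩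
  have finrank_ker : Module.finrank ℂ (LinearMap.ker (incrementCombination lam mu)) = 1 := by
    rw [ker_incrementCombination hlam hmu h0, finrank_span_singleton one_ne_zero]
  have rank_nullity := LinearMap.finrank_range_add_finrank_ker (incrementCombination lam mu)
  rw [range_incrementCombination hlam hmu hl hm, finrank_ker, Module.finrank_fintype_fun_eq_card,
    Fintype.card_sum, Fintype.card_fin, Fintype.card_fin] at rank_nullity
  rw [finrank_H1_obj_eq_finrank_loopPeriods, ← rank_nullity, Nat.add_sub_cancel]

theorem statement1 (p q : ℕ) (hq : 2 ≤ q) (hqp : q ≤ p) (n : ℕ) (hn : n = p + q)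
    (lam : Fin p → ℂ) (mu : Fin q → ℂ)
    (hlam : Function.Injective lam) (hmu : Function.Injective mu)
    -- at most one of the `λᵢ, μⱼ` is zero
    (h0 : ∀ (i : Fin p) (j : Fin q), lam i ≠ 0 ∨ mu j ≠ 0) :
    Module.finrank ℂ (H1.obj (TopCat.of (MilnorFibre p q lam mu))) = n - 1 := by
  have : Nontrivial (Fin p) := Fin.nontrivial_iff_two_le.2 (hq.trans hqp)
  have : Nontrivial (Fin q) := Fin.nontrivial_iff_two_le.2 hq
  exact hn ▸ statement1_general hlam hmu (exists_ne_zero_of_injective hlam)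
    (exists_ne_zero_of_injective hmu) h0
end

section
/- Let 𝒜 be a line arrangement and P₁ ≠ P₂ two points of ℙ²(ℂ) such that every line of 𝒜 contains P₁ or P₂. Assume moreover that some line of 𝒜 contains P₁ but not P₂, and some line of 𝒜 contains P₂ but not P₁. Then 𝒜 admits no weak (k,d)-multinet. -/
/-- The complex projective plane. -/
abbrev PP2 : Type := Projectivization ℂ (Fin 3 → ℂ)

/-- A line in `ℙ²(ℂ)` is (the projectivization of) a 2-dimensional linear
subspace of `ℂ³`. -/
def IsProjLine (W : Submodule ℂ (Fin 3 → ℂ)) : Prop :=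
  Module.finrank ℂ W = 2

/-- A point of `ℙ²(ℂ)` lies on the line given by the subspace `W`. -/
def OnLine (P : PP2) (W : Submodule ℂ (Fin 3 → ℂ)) : Prop :=
  P.submodule ≤ W

/-- A weak `(k,d)`-multinet on the line arrangement `𝒜`, with class-assignment
function `cls`, multiplicity function `m` and base locus `X`. -/
structure IsWeakMultinet (𝒜 : Finset (Submodule ℂ (Fin 3 → ℂ))) (k d : ℕ)
    (cls : Submodule ℂ (Fin 3 → ℂ) → Fin k) (m : Submodule ℂ (Fin 3 → ℂ) → ℕ)
    (X : Set PP2) : Prop where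
  k_ge : 3 ≤ k
  d_ge : 1 ≤ d
  m_pos : ∀ W ∈ 𝒜, 1 ≤ m W
  /-- every point of the base locus lies on at least two lines of `𝒜` -/
  X_mult : ∀ P ∈ X, ∃ W ∈ 𝒜, ∃ W' ∈ 𝒜, W ≠ W' ∧ OnLine P W ∧ OnLine P W'
  /-- (i): each class has total multiplicity `d` -/
  sum_classes : ∀ i : Fin k,
    ∑ᶠ W ∈ {W ∈ (↑𝒜 : Set (Submodule ℂ (Fin 3 → ℂ))) | cls W = i}, m W = d
  /-- (ii): lines from different classes meet inside the base locus -/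
  inter_mem : ∀ W ∈ 𝒜, ∀ W' ∈ 𝒜, cls W ≠ cls W' →
    ∀ P : PP2, OnLine P W → OnLine P W' → P ∈ X
  /-- (iii): for `p ∈ X` the number `n_p` does not depend on the class -/
  sum_point : ∀ P ∈ X, ∀ i j : Fin k,
    ∑ᶠ W ∈ {W ∈ (↑𝒜 : Set (Submodule ℂ (Fin 3 → ℂ))) | cls W = i ∧ OnLine P W}, m W
      = ∑ᶠ W ∈ {W ∈ (↑𝒜 : Set (Submodule ℂ (Fin 3 → ℂ))) | cls W = j ∧ OnLine P W}, m W

/-!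
Suppose a line `a` through `P₁` but not `P₂` and a line `b` through `P₂` but not `P₁` lay in
different classes. They meet in a point of the base locus other than `P₁` and `P₂`, so a line of a
third class passes through it; but that line also contains `P₁` or `P₂`, hence is `a` or `b`, which
is absurd. So every line other than `P₁P₂` lies in one and the same class, and the single line
`P₁P₂` cannot fill two further classes.
-/

section Incidence

variable {P L κ : Type*} {I : P → L → Prop} {𝒜 : Set L} {c : L → κ} {p₁ p₂ : P} {a b l : L}

/-- An arrangement of lines in a projective plane, seen through its incidence relation only
(`I p l` means that `p` lies on `l`): any two lines meet, and two distinct lines share at most one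
point. -/
structure IsProjectiveArrangement (I : P → L → Prop) (𝒜 : Set L) : Prop where
  exists_incident : ∀ a ∈ 𝒜, ∀ b ∈ 𝒜, ∃ p, I p a ∧ I p b
  eq_of_incident : ∀ a ∈ 𝒜, ∀ b ∈ 𝒜, ∀ p q, p ≠ q → I p a → I q a → I p b → I q b → a = b

/-- The combinatorial content of a weak multinet: a colouring of the lines of `𝒜` using every one of
at least three colours, such that a point where two colours meet lies on lines of all colours. -/
structure IsNetColoring (I : P → L → Prop) (𝒜 : Set L) (c : L → κ) : Prop where
  three_le : 3 ≤ ENat.card κ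
  surjOn : Set.SurjOn c 𝒜 Set.univ
  exists_color_eq : ∀ a ∈ 𝒜, ∀ b ∈ 𝒜, c a ≠ c b → ∀ p, I p a → I p b →
    ∀ i, ∃ l ∈ 𝒜, c l = i ∧ I p l

namespace IsNetColoring

lemma color_eq_of_separated (hc : IsNetColoring I 𝒜 c) (h𝒜 : IsProjectiveArrangement I 𝒜)
    (hthrough : ∀ l ∈ 𝒜, I p₁ l ∨ I p₂ l)
    (ha : a ∈ 𝒜) (ha₁ : I p₁ a) (ha₂ : ¬ I p₂ a) (hb : b ∈ 𝒜) (hb₂ : I p₂ b) (hb₁ : ¬ I p₁ b) :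
    c a = c b := by
  by_contra hab
  obtain ⟨q, hqa, hqb⟩ := h𝒜.exists_incident a ha b hb
  obtain ⟨i, hia, hib⟩ := ENat.exists_ne_ne_of_three_le hc.three_le (c a) (c b)
  obtain ⟨l, hl, rfl, hql⟩ := hc.exists_color_eq a ha b hb hab q hqa hqb i
  have hq₁ : q ≠ p₁ := by rintro rfl; exact hb₁ hqb
  have hq₂ : q ≠ p₂ := by rintro rfl; exact ha₂ hqa
  rcases hthrough l hl with hl₁ | hl₂
  · exact hia (congrArg c (h𝒜.eq_of_incident l hl a ha q p₁ hq₁ hql hl₁ hqa ha₁))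
  · exact hib (congrArg c (h𝒜.eq_of_incident l hl b hb q p₂ hq₂ hql hl₂ hqb hb₂))

lemma incident_of_color_ne (hc : IsNetColoring I 𝒜 c) (h𝒜 : IsProjectiveArrangement I 𝒜)
    (hthrough : ∀ l ∈ 𝒜, I p₁ l ∨ I p₂ l)
    (ha : a ∈ 𝒜) (ha₁ : I p₁ a) (ha₂ : ¬ I p₂ a) (hb : b ∈ 𝒜) (hb₂ : I p₂ b) (hb₁ : ¬ I p₁ b)
    (hl : l ∈ 𝒜) (hla : c l ≠ c a) : I p₁ l ∧ I p₂ l := by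
  have hab : c a = c b := hc.color_eq_of_separated h𝒜 hthrough ha ha₁ ha₂ hb hb₂ hb₁
  by_cases hl₁ : I p₁ l
  · refine ⟨hl₁, by_contra fun hl₂ => hla ?_⟩
    exact (hc.color_eq_of_separated h𝒜 hthrough hl hl₁ hl₂ hb hb₂ hb₁).trans hab.symm
  · have hl₂ : I p₂ l := (hthrough l hl).resolve_left hl₁
    exact absurd (hc.color_eq_of_separated h𝒜 hthrough ha ha₁ ha₂ hl hl₂ hl₁).symm hla

end IsNetColoring

theorem statement2_general (h𝒜 : IsProjectiveArrangement I 𝒜)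
    (hthrough : ∀ l ∈ 𝒜, I p₁ l ∨ I p₂ l)
    (h₁ : ∃ l ∈ 𝒜, I p₁ l ∧ ¬ I p₂ l) (h₂ : ∃ l ∈ 𝒜, I p₂ l ∧ ¬ I p₁ l) :
    ¬ IsNetColoring I 𝒜 c := by
  intro hc
  obtain ⟨a, ha, ha₁, ha₂⟩ := h₁
  obtain ⟨b, hb, hb₂, hb₁⟩ := h₂
  have hp : p₁ ≠ p₂ := by rintro rfl; exact ha₂ ha₁
  have incident : ∀ l ∈ 𝒜, c l ≠ c a → I p₁ l ∧ I p₂ l := fun l hl =>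
    hc.incident_of_color_ne h𝒜 hthrough ha ha₁ ha₂ hb hb₂ hb₁ hl
  obtain ⟨i, hia, -⟩ := ENat.exists_ne_ne_of_three_le hc.three_le (c a) (c a)
  obtain ⟨j, hja, hji⟩ := ENat.exists_ne_ne_of_three_le hc.three_le (c a) i
  obtain ⟨u, hu, rfl⟩ := hc.surjOn (Set.mem_univ i)
  obtain ⟨v, hv, rfl⟩ := hc.surjOn (Set.mem_univ j)
  obtain ⟨hu₁, hu₂⟩ := incident u hu hia
  obtain ⟨hv₁, hv₂⟩ := incident v hv hja
  exact hji (congrArg c (h𝒜.eq_of_incident v hv u hu p₁ p₂ hp hv₁ hv₂ hu₁ hu₂))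

end Incidence

section ProjectivePlane

open Module

variable {K V : Type*} [DivisionRing K] [AddCommGroup V] [Module K V]

lemma submodule_sup_submodule_eq {P Q : Projectivization K V} (hPQ : P ≠ Q) {W : Submodule K V}
    (hW : finrank K W = 2) (hP : P.submodule ≤ W) (hQ : Q.submodule ≤ W) :
    P.submodule ⊔ Q.submodule = W := by
  have : FiniteDimensional K W := finite_of_finrank_pos (by omega)
  have : FiniteDimensional K P.submodule := Submodule.finiteDimensional_of_le hP
  have : FiniteDimensional K Q.submodule := Submodule.finiteDimensional_of_le hQ
  have hdisjoint : Disjoint P.submodule Q.submodule :=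
    (Submodule.isAtom_iff_finrank_eq_one.mpr P.finrank_submodule).disjoint_of_ne
      (Submodule.isAtom_iff_finrank_eq_one.mpr Q.finrank_submodule)
      (Projectivization.submodule_injective.ne hPQ)
  refine Submodule.eq_of_le_of_finrank_eq (sup_le hP hQ) ?_
  have hsum := Submodule.finrank_sup_add_finrank_inf_eq P.submodule Q.submodule
  rw [hdisjoint.eq_bot, finrank_bot, P.finrank_submodule, Q.finrank_submodule] at hsum
  omega

lemma exists_submodule_le_of_ne_bot {W : Submodule K V} (hW : W ≠ ⊥) :
    ∃ P : Projectivization K V, P.submodule ≤ W := by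
  obtain ⟨v, hv, hv₀⟩ := Submodule.exists_mem_ne_zero_of_ne_bot hW
  exact ⟨Projectivization.mk K v hv₀, by simpa using hv⟩

lemma inf_ne_bot_of_finrank_lt_add [FiniteDimensional K V] {U W : Submodule K V}
    (h : finrank K V < finrank K U + finrank K W) : U ⊓ W ≠ ⊥ := fun hbot =>
  h.not_ge (Submodule.finrank_add_finrank_le_of_disjoint (disjoint_iff.mpr hbot))

lemma isProjectiveArrangement_of_finrank_eq_two (hV : finrank K V = 3) {𝒜 : Set (Submodule K V)}
    (h𝒜 : ∀ W ∈ 𝒜, finrank K W = 2) :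
    IsProjectiveArrangement (fun (P : Projectivization K V) W => P.submodule ≤ W) 𝒜 where
  exists_incident U hU W hW := by
    have : FiniteDimensional K V := finite_of_finrank_pos (by omega)
    have hinf : U ⊓ W ≠ ⊥ := inf_ne_bot_of_finrank_lt_add (by rw [h𝒜 U hU, h𝒜 W hW]; omega)
    obtain ⟨P, hP⟩ := exists_submodule_le_of_ne_bot hinf
    exact ⟨P, le_inf_iff.mp hP⟩
  eq_of_incident U hU W hW P Q hPQ hPU hQU hPW hQW :=
    (submodule_sup_submodule_eq hPQ (h𝒜 U hU) hPU hQU).symm.trans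
      (submodule_sup_submodule_eq hPQ (h𝒜 W hW) hPW hQW)

end ProjectivePlane

lemma IsWeakMultinet.isNetColoring {𝒜 : Finset (Submodule ℂ (Fin 3 → ℂ))} {k d : ℕ}
    {cls : Submodule ℂ (Fin 3 → ℂ) → Fin k} {m : Submodule ℂ (Fin 3 → ℂ) → ℕ} {X : Set PP2}
    (H : IsWeakMultinet 𝒜 k d cls m X) : IsNetColoring OnLine (𝒜 : Set _) cls where
  three_le := by simpa using H.k_ge
  surjOn i _ := by
    have hsum := H.sum_classes i
    exact nonempty_of_finsum_mem_ne_zero (hsum.trans_ne (Nat.one_le_iff_ne_zero.mp H.d_ge))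
  exists_color_eq U hU W hW hUW P hPU hPW i := by
    have hpos : 0 < ∑ᶠ A ∈ {A ∈ (𝒜 : Set _) | cls A = cls U ∧ OnLine P A}, m A :=
      finsum_cond_pos (fun _ _ => Nat.zero_le _) ⟨U, ⟨hU, rfl, hPU⟩, H.m_pos U hU⟩
        (𝒜.finite_toSet.subset fun _ hA => hA.2.1)
    rw [H.sum_point P (H.inter_mem U hU W hW hUW P hPU hPW) (cls U) i] at hpos
    exact nonempty_of_finsum_mem_ne_zero hpos.ne'

theorem statement2 (P₁ P₂ : PP2) (hP : P₁ ≠ P₂)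
    (𝒜 : Finset (Submodule ℂ (Fin 3 → ℂ))) (h𝒜 : ∀ W ∈ 𝒜, IsProjLine W)
    (hthrough : ∀ W ∈ 𝒜, OnLine P₁ W ∨ OnLine P₂ W)
    (h₁ : ∃ W ∈ 𝒜, OnLine P₁ W ∧ ¬ OnLine P₂ W)
    (h₂ : ∃ W ∈ 𝒜, OnLine P₂ W ∧ ¬ OnLine P₁ W) :
    ¬ ∃ (k d : ℕ) (cls : Submodule ℂ (Fin 3 → ℂ) → Fin k)
        (m : Submodule ℂ (Fin 3 → ℂ) → ℕ) (X : Set PP2),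
        IsWeakMultinet 𝒜 k d cls m X := by
  rintro ⟨k, d, cls, m, X, H⟩
  exact statement2_general (isProjectiveArrangement_of_finrank_eq_two (by simp) h𝒜) hthrough h₁ h₂
    H.isNetColoring
end

section
/- Let p ≥ 2 and q ≥ 1 be integers, n = p + q, c ∈ ℂ with c ≠ 0, and μ₁,…,μ_q ∈ ℂ pairwise distinct. Let f = yⁿ + zⁿ − c·x₀^p·∏_{j=1}^q (x₀ − μⱼx₂) ∈ ℂ[y,z,x₀,x₂]. Then the set of points v ∈ ℂ⁴ at which all four partial derivatives ∂f/∂y, ∂f/∂z, ∂f/∂x₀, ∂f/∂x₂ vanish is exactly {(0,0,0,t) : t ∈ ℂ}. In particular, the projective surface in ℙ³ defined by f is singular only at the point (0:0:0:1). -/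
open MvPolynomial

/-!
Write `f = yⁿ + zⁿ - c g` with `g = x₀ᵖ ∏ⱼ (x₀ - μⱼ x₂)`. At a common zero of the partial
derivatives, `∂f/∂y` and `∂f/∂z` force `y = z = 0`, and Euler's identity `∑ xᵢ ∂ᵢf = n f` then gives
`g = 0`. If `x₀ ≠ 0`, one linear factor `x₀ - μⱼ x₂` of `g` vanishes; since its `x₀`-derivative is
`1`, the product rule turns `∂g/∂x₀ = 0` into the vanishing of the complementary product, hence of a
second factor. Two distinct lines `x₀ = μⱼ x₂`, `x₀ = μₖ x₂` meet only where `x₀ = x₂ = 0`, a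
contradiction. Conversely, `f` lies in the square of the ideal `(y, z, x₀)`, so its derivatives lie
in that ideal.
-/

section CriticalSet

variable {σ R : Type*} [CommSemiring R]

/-- The common zero set of all partial derivatives of `f`. For `f` homogeneous of degree at least
two, it is the affine cone over the singular locus of the projective hypersurface `f = 0`, as long
as the degree is nonzero in `R`. -/
def criticalSet (f : MvPolynomial σ R) : Set (σ → R) :=
  {v | ∀ i, eval v (pderiv i f) = 0}

lemma eval_eq_zero_of_mem_criticalSet [Finite σ] [NoZeroDivisors R] {f : MvPolynomial σ R} {n : ℕ}
    (hf : f.IsHomogeneous n) (hn : (n : R) ≠ 0) {v : σ → R} (hv : v ∈ criticalSet f) :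
    eval v f = 0 := by
  cases nonempty_fintype σ
  have euler : ∑ i, v i * eval v (pderiv i f) = n * eval v f := by
    simpa using congrArg (eval v) hf.sum_X_mul_pderiv
  have : (n : R) * eval v f = 0 := by
    rw [← euler]
    exact Finset.sum_eq_zero fun i _ => by rw [hv i, mul_zero]
  exact (mul_eq_zero.1 this).resolve_left hn

lemma eval_pderiv_mul_of_eval_eq_zero {f : MvPolynomial σ R} {v : σ → R} (hf : eval v f = 0)
    (g : MvPolynomial σ R) (i : σ) :
    eval v (pderiv i (f * g)) = eval v (pderiv i f) * eval v g := by
  rw [pderiv_mul, map_add, map_mul, map_mul, hf, zero_mul, add_zero]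

lemma eval_pderiv_pow_eq_zero {f : MvPolynomial σ R} {v : σ → R} (hf : eval v f = 0) {n : ℕ}
    (hn : 2 ≤ n) (i : σ) : eval v (pderiv i (f ^ n)) = 0 := by
  have : n - 1 ≠ 0 := by omega
  simp [hf, this]

end CriticalSet

section PencilForm

variable {σ ι R : Type*} [Fintype ι] [CommRing R]

/-- The binary form `x_a ^ p * ∏ⱼ (x_a - μⱼ x_b)`, cutting out the line `x_a = 0` with multiplicity
`p` and the lines `x_a = μⱼ x_b`. It is placed in a polynomial ring on any variables containing
`a` and `b`. -/
noncomputable def pencilForm (a b : σ) (p : ℕ) (mu : ι → R) : MvPolynomial σ R :=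
  X a ^ p * ∏ j, (X a - C (mu j) * X b)

lemma isHomogeneous_pencilForm (a b : σ) (p : ℕ) (mu : ι → R) :
    (pencilForm a b p mu).IsHomogeneous (p + Fintype.card ι) := by
  have hfactor (j : ι) : (X a - C (mu j) * X b : MvPolynomial σ R).IsHomogeneous 1 :=
    (isHomogeneous_X R a).sub (isHomogeneous_C_mul_X (mu j) b)
  have hprod := IsHomogeneous.prod Finset.univ _ _ fun j _ => hfactor j
  simpa [pencilForm] using (isHomogeneous_X_pow (R := R) a p).mul hprod

lemma pencilForm_mem_supported (a b : σ) (p : ℕ) (mu : ι → R) :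
    pencilForm a b p mu ∈ supported R {a, b} := by
  have ha : X a ∈ supported R {a, b} := Algebra.subset_adjoin (by simp)
  have hb : X b ∈ supported R {a, b} := Algebra.subset_adjoin (by simp)
  exact mul_mem (pow_mem ha p) (prod_mem fun j _ =>
    sub_mem ha (mul_mem (Subalgebra.algebraMap_mem _ (mu j)) hb))

lemma pderiv_pencilForm_of_ne {a b i : σ} (ha : i ≠ a) (hb : i ≠ b) (p : ℕ) (mu : ι → R) :
    pderiv i (pencilForm a b p mu) = 0 := by
  refine pderiv_eq_zero_of_notMem_vars fun hi => ?_
  have := mem_supported.1 (pencilForm_mem_supported a b p mu) hi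
  simp [ha, hb] at this

lemma eval_pderiv_pencilForm_eq_zero {a : σ} {v : σ → R} (ha : v a = 0) {p : ℕ} (hp : 2 ≤ p)
    (b : σ) (mu : ι → R) (i : σ) : eval v (pderiv i (pencilForm a b p mu)) = 0 := by
  have hX : eval v (X a) = 0 := by rw [eval_X, ha]
  have hXp : eval v (X a ^ p) = 0 := by rw [map_pow, hX, zero_pow (by omega)]
  rw [pencilForm, eval_pderiv_mul_of_eval_eq_zero hXp, eval_pderiv_pow_eq_zero hX hp, zero_mul]

lemma apply_eq_zero_of_pencilForm_critical [IsDomain R] {a b : σ} (hab : a ≠ b) {p : ℕ}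
    {mu : ι → R} (hmu : Function.Injective mu) {v : σ → R}
    (hg : eval v (pencilForm a b p mu) = 0) (hdg : eval v (pderiv a (pencilForm a b p mu)) = 0) :
    v a = 0 := by
  classical
  by_contra hva
  let line (j : ι) : MvPolynomial σ R := X a - C (mu j) * X b
  have eval_line (j : ι) : eval v (line j) = v a - mu j * v b := by simp [line]
  obtain ⟨j, hj⟩ : ∃ j, eval v (line j) = 0 := by
    simpa [pencilForm, eval_prod, Finset.prod_eq_zero_iff, hva, line] using hg
  have hsplit : pencilForm a b p mu = line j * (X a ^ p * ∏ k ∈ Finset.univ.erase j, line k) := by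
    rw [mul_left_comm, Finset.mul_prod_erase _ _ (Finset.mem_univ j), pencilForm]
  have pderiv_line : pderiv a (line j) = 1 := by simp [line, pderiv_X_of_ne hab.symm]
  have hcofactor : ∏ k ∈ Finset.univ.erase j, eval v (line k) = 0 := by
    rw [hsplit, eval_pderiv_mul_of_eval_eq_zero hj, pderiv_line] at hdg
    simpa [eval_prod, hva] using hdg
  obtain ⟨k, hkj, hk⟩ := Finset.prod_eq_zero_iff.1 hcofactor
  rw [eval_line] at hj hk
  have hvb : v b ≠ 0 := fun h => hva (by simpa [h] using hj)
  have : mu k = mu j := mul_right_cancel₀ hvb (by linear_combination hj - hk)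
  exact Finset.ne_of_mem_erase hkj (hmu this)

end PencilForm

section FibrePolynomial

variable {ι R : Type*} [Fintype ι] [CommRing R]

/-- The defining polynomial `yⁿ + zⁿ - c x₀ᵖ ∏ⱼ (x₀ - μⱼ x₂)` of a fibre `Y_s`, where `c = h(s)` and
the variables `y, z, x₀, x₂` are numbered `0, 1, 2, 3`. -/
noncomputable def fibrePolynomial (n p : ℕ) (c : R) (mu : ι → R) : MvPolynomial (Fin 4) R :=
  X 0 ^ n + X 1 ^ n - C c * pencilForm 2 3 p mu

lemma isHomogeneous_fibrePolynomial {n p : ℕ} (hn : n = p + Fintype.card ι) (c : R) (mu : ι → R) :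
    (fibrePolynomial n p c mu).IsHomogeneous n :=
  ((isHomogeneous_X_pow 0 n).add (isHomogeneous_X_pow 1 n)).sub
    (hn ▸ (isHomogeneous_pencilForm 2 3 p mu).C_mul c)

lemma pderiv_fibrePolynomial_of_ne {i : Fin 4} (h2 : i ≠ 2) (h3 : i ≠ 3) (n p : ℕ) (c : R)
    (mu : ι → R) :
    pderiv i (fibrePolynomial n p c mu) = (n : MvPolynomial (Fin 4) R) * X i ^ (n - 1) := by
  rw [fibrePolynomial, map_sub, pderiv_C_mul, pderiv_pencilForm_of_ne h2 h3]
  fin_cases i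
  · simp [pderiv_X]
  · simp [pderiv_X]
  · exact absurd rfl h2
  · exact absurd rfl h3

lemma pderiv_two_fibrePolynomial (n p : ℕ) (c : R) (mu : ι → R) :
    pderiv 2 (fibrePolynomial n p c mu) = -(C c * pderiv 2 (pencilForm 2 3 p mu)) := by
  simp [fibrePolynomial, pderiv_X]

lemma mem_criticalSet_fibrePolynomial {n p : ℕ} (hn : 2 ≤ n) (hp : 2 ≤ p) (c : R) (mu : ι → R)
    {v : Fin 4 → R} (h0 : v 0 = 0) (h1 : v 1 = 0) (h2 : v 2 = 0) :
    v ∈ criticalSet (fibrePolynomial n p c mu) := by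
  intro i
  have hy := eval_pderiv_pow_eq_zero (f := X 0) (v := v) (by rw [eval_X, h0]) hn i
  have hz := eval_pderiv_pow_eq_zero (f := X 1) (v := v) (by rw [eval_X, h1]) hn i
  have hg := eval_pderiv_pencilForm_eq_zero h2 hp 3 mu i
  simp only [fibrePolynomial, map_sub, map_add, pderiv_C_mul, map_mul, hy, hz, hg, mul_zero,
    add_zero, sub_zero]

lemma apply_eq_zero_of_mem_criticalSet_fibrePolynomial [NoZeroDivisors R] {n p : ℕ}
    (hn : (n : R) ≠ 0) {c : R} {mu : ι → R} {v : Fin 4 → R}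
    (hv : v ∈ criticalSet (fibrePolynomial n p c mu)) {i : Fin 4} (h2 : i ≠ 2) (h3 : i ≠ 3) :
    v i = 0 := by
  have hi : (n : R) * v i ^ (n - 1) = 0 := by
    simpa only [pderiv_fibrePolynomial_of_ne h2 h3, map_mul, map_natCast, map_pow, eval_X]
      using hv i
  exact eq_zero_of_pow_eq_zero ((mul_eq_zero.1 hi).resolve_left hn)

lemma criticalSet_fibrePolynomial [IsDomain R] {n p : ℕ} (hp : 2 ≤ p)
    (hn : n = p + Fintype.card ι) (hnR : (n : R) ≠ 0) {c : R} (hc : c ≠ 0) {mu : ι → R}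
    (hmu : Function.Injective mu) :
    criticalSet (fibrePolynomial n p c mu) = {v | v 0 = 0 ∧ v 1 = 0 ∧ v 2 = 0} := by
  ext v
  refine ⟨fun hv => ?_, fun ⟨h0, h1, h2⟩ =>
    mem_criticalSet_fibrePolynomial (by omega) hp c mu h0 h1 h2⟩
  have h0 : v 0 = 0 :=
    apply_eq_zero_of_mem_criticalSet_fibrePolynomial hnR hv (by decide) (by decide)
  have h1 : v 1 = 0 :=
    apply_eq_zero_of_mem_criticalSet_fibrePolynomial hnR hv (by decide) (by decide)
  have hg : eval v (pencilForm 2 3 p mu) = 0 := by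
    have hf : eval v (fibrePolynomial n p c mu) = 0 :=
      eval_eq_zero_of_mem_criticalSet (isHomogeneous_fibrePolynomial hn c mu) hnR hv
    simpa [fibrePolynomial, h0, h1, show n ≠ 0 by omega, hc] using hf
  have hdg : eval v (pderiv 2 (pencilForm 2 3 p mu)) = 0 := by
    simpa [pderiv_two_fibrePolynomial, hc] using hv 2
  exact ⟨h0, h1, apply_eq_zero_of_pencilForm_critical (by decide) hmu hg hdg⟩

end FibrePolynomial

lemma projectivization_mk_eq_mk_ite {K σ : Type*} [DivisionRing K] [DecidableEq σ] {k : σ}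
    {v : σ → K} (hv : v ≠ 0) (hvk : ∀ i ≠ k, v i = 0)
    (he : (fun i => if i = k then 1 else 0 : σ → K) ≠ 0) :
    Projectivization.mk K v hv = Projectivization.mk K (fun i => if i = k then 1 else 0) he := by
  rw [Projectivization.mk_eq_mk_iff']
  refine ⟨v k, funext fun i => ?_⟩
  by_cases hi : i = k
  · simp [hi]
  · simp [hi, hvk i hi]

theorem statement7_general {K ι : Type*} [Field K] [Fintype ι] (p : ℕ) (hp : 2 ≤ p) (n : ℕ)
    (hn : n = p + Fintype.card ι) (hnK : (n : K) ≠ 0) (c : K) (hc : c ≠ 0) (mu : ι → K)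
    (hmu : Function.Injective mu) (f : MvPolynomial (Fin 4) K)
    (hf : f = X 0 ^ n + X 1 ^ n - C c * X 2 ^ p * ∏ j, (X 2 - C (mu j) * X 3)) :
    {v : Fin 4 → K | ∀ i : Fin 4, eval v (pderiv i f) = 0}
        = {v : Fin 4 → K | v 0 = 0 ∧ v 1 = 0 ∧ v 2 = 0} ∧
    ∀ (v : Fin 4 → K) (hv : v ≠ 0), (∀ i : Fin 4, eval v (pderiv i f) = 0) →
      Projectivization.mk K v hv
        = Projectivization.mk K (fun i : Fin 4 => if i = 3 then 1 else 0)
            (by intro h; simpa using congrFun h 3) := by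
  have hfibre : f = fibrePolynomial n p c mu := by rw [hf, fibrePolynomial, pencilForm, mul_assoc]
  have hcrit : criticalSet f = {v | v 0 = 0 ∧ v 1 = 0 ∧ v 2 = 0} :=
    hfibre ▸ criticalSet_fibrePolynomial hp hn hnK hc hmu
  refine ⟨hcrit, fun v hv hvf => projectivization_mk_eq_mk_ite hv (fun i hi => ?_) _⟩
  obtain ⟨h0, h1, h2⟩ := hcrit.subset hvf
  fin_cases i
  exacts [h0, h1, h2, absurd rfl hi]

theorem statement7 (p q : ℕ) (hp : 2 ≤ p) (hq : 1 ≤ q) (n : ℕ) (hn : n = p + q)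
    (c : ℂ) (hc : c ≠ 0) (mu : Fin q → ℂ) (hmu : Function.Injective mu)
    (f : MvPolynomial (Fin 4) ℂ)
    -- variables: `X 0 = y`, `X 1 = z`, `X 2 = x₀`, `X 3 = x₂`
    (hf : f = X 0 ^ n + X 1 ^ n - C c * X 2 ^ p * ∏ j, (X 2 - C (mu j) * X 3)) :
    {v : Fin 4 → ℂ | ∀ i : Fin 4, eval v (pderiv i f) = 0}
        = {v : Fin 4 → ℂ | v 0 = 0 ∧ v 1 = 0 ∧ v 2 = 0} ∧
    ∀ (v : Fin 4 → ℂ) (hv : v ≠ 0), (∀ i : Fin 4, eval v (pderiv i f) = 0) →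
      Projectivization.mk ℂ v hv
        = Projectivization.mk ℂ (fun i : Fin 4 => if i = 3 then 1 else 0)
            (by intro h; simpa using congrFun h 3) := by
  exact statement7_general p hp n (by rw [hn, Fintype.card_fin]) (Nat.cast_ne_zero.2 (by omega))
    c hc mu hmu f hf
end
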